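/- arXiv:2203.05162 — 2 statements merged into one kernel-verified Lean document; each statement's English description precedes it below -/
import Mathlib

section
/- Let K be a field, D a K-linear idempotent complete triangulated category, and 𝔟 a bounded co-t-structure on D with finite co-heart. If D' → E → F → ΣD' is an exact triangle in D, then δ̌_t^𝔟(E) ≤ δ̌_t^𝔟(D') + δ̌_t^𝔟(F) for every t ∈ ℝ. -/
/-!
A filtration of an object is placed in a window of degrees `a, …, a + n - 1` by allowing zero
factors (`CoSub.Filt`), and two filtrations can be placed in a common window. Subadditivity
(`CoSub.Filt.subadd`) is proved by induction on `n`.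

Let `N = a + n` be the top degree of a window with `n + 1` degrees and `D' → E → F` a triangle, with
top factors `X⟦N⟧` of `D'` and `Y⟦N⟧` of `F` and fibres `A → D'` and `B → F`. Since `B` has no maps to
`X⟦N + 1⟧`, the connecting map of the triangle restricts to a map `B → A⟦1⟧`, which gives an
extension `E₀` of `B` by `A` with a map `j : E₀ → E`. By induction `E₀` has a filtration of weight
at most the sum of those of `A` and `B`. The two halves of a co-t-structure are each other's
orthogonals (`CoSub.mem_ge`, `CoSub.mem_le`), and a diagram chase (`CoSub.cone_orthogonal`) shows that
the cone of `j` is `Y₁⟦N⟧` with `Y₁` in the co-heart; the octahedral axiom is not needed.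

The number of summands of `Y₁` is a priori unrelated to that of `X ⊞ Y`. The projection
`E → Y₁⟦N⟧` and the natural map `E → (X ⊞ Y)⟦N⟧` factor through each other, so Schanuel's lemma
(`CoSub.schanuel`) identifies `E₀ ⊞ (X ⊞ Y)⟦N - 1⟧` with the sum of `Y₁⟦N - 1⟧` and the fibre of the
second map. Whenever `Y₁` has more summands than `X ⊞ Y`, that fibre has a filtration of weight at
most that of `E₀`, because summands in the top degree of a filtration can be added and cancelled
(`CoSub.Filt.add`, `CoSub.Filt.cancel`), with additivity of the count by the Krull–Schmidt property.
So one of the two approximations of `E` gives the bound (`CoSub.Filt.min`).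
-/

/- Common definitions: filtrations, categorical complexity and entropy,
(co-)t-structures, hearts/co-hearts, and associated entropy-type invariants. -/

open CategoryTheory CategoryTheory.Limits CategoryTheory.Pretriangulated Filter
open scoped ENNReal

universe w v u

namespace CatEnt

/-- Iterates of an endofunctor. -/
def iter {C : Type u} [Category.{v} C] (Φ : C ⥤ C) : ℕ → C ⥤ C
  | 0 => 𝟭 C
  | (n + 1) => iter Φ n ⋙ Φ

variable (C : Type u) [Category.{v} C] [Preadditive C] [HasZeroObject C]
  [HasShift C ℤ] [∀ n : ℤ, (shiftFunctor C n).Additive] [Pretriangulated C]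
  [HasFiniteBiproducts C]

/-- A filtration `0 = A 0 → A 1 → ⋯ → A m ≅ F` whose successive cones (factors)
are the objects `X i`, and all of whose objects lie in the class `S`. -/
def HasFiltrationIn (S : Set C) (F : C) {m : ℕ} (X : Fin m → C) : Prop :=
  ∃ A : Fin (m + 1) → C, IsZero (A 0) ∧ Nonempty (A (Fin.last m) ≅ F) ∧
    (∀ i, A i ∈ S) ∧
    ∀ i : Fin m, ∃ (f : A i.castSucc ⟶ A i.succ) (g : A i.succ ⟶ X i)
      (h : X i ⟶ (A i.castSucc)⟦(1 : ℤ)⟧), Triangle.mk f g h ∈ distTriang C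

/-- The categorical complexity `δ_t(E, F)` computed inside the class `S`:
the infimum of `∑ exp (k i * t)` over all filtrations of objects `F ⊞ F'`
(`F' ∈ S`) with factors the shifts `E⟦k i⟧`. -/
noncomputable def complexityIn (S : Set C) (t : ℝ) (E F : C) : ℝ≥0∞ :=
  sInf { c | ∃ (m : ℕ) (k : Fin m → ℤ) (F' : C), F' ∈ S ∧
    HasFiltrationIn C S (F ⊞ F') (fun i => E⟦k i⟧) ∧
    c = ENNReal.ofReal (∑ i, Real.exp ((k i : ℝ) * t)) }

/-- The categorical complexity `δ_t(E,F)` of Dimitrov–Haiden–Katzarkov–Kontsevich. -/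
noncomputable def complexity (t : ℝ) (E F : C) : ℝ≥0∞ :=
  complexityIn C Set.univ t E F

/-- `G` is a split-generator of the (triangulated sub)category determined by `S`. -/
def IsSplitGeneratorIn (S : Set C) (G : C) : Prop :=
  G ∈ S ∧ ∀ X ∈ S, ∃ (m : ℕ) (k : Fin m → ℤ) (F' : C), F' ∈ S ∧
    HasFiltrationIn C S (X ⊞ F') (fun i => G⟦k i⟧)

/-- `G` is a split-generator of `C`. -/
def IsSplitGenerator (G : C) : Prop := IsSplitGeneratorIn C Set.univ G

/-- The sequence `N ↦ (1/N) log (f N)`, with values in the extended reals. -/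
noncomputable def entSeq (f : ℕ → ℝ≥0∞) (N : ℕ) : EReal :=
  (((N : ℝ)⁻¹ : ℝ) : EReal) * ENNReal.log (f N)

/-- The categorical entropy of `Φ` restricted to `S`, computed with the
split-generator `G`: `limsup_N (1/N) log δ_t(G, Φ^N G)`. -/
noncomputable def entropyIn (S : Set C) (Φ : C ⥤ C) (G : C) (t : ℝ) : EReal :=
  Filter.limsup
    (entSeq (fun N => complexityIn C S t G ((iter Φ N).obj G))) Filter.atTop

/-- The categorical entropy `h_t(Φ)`, computed with the split-generator `G`. -/
noncomputable def entropy (Φ : C ⥤ C) (G : C) (t : ℝ) : EReal :=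
  entropyIn C Set.univ Φ G t

/-- `Φ^N` is not isomorphic to `0` on `S`, for all `N > 0`. -/
def PowersNonzeroOn (S : Set C) (Φ : C ⥤ C) : Prop :=
  ∀ N : ℕ, 0 < N → ∃ X ∈ S, ¬ IsZero ((iter Φ N).obj X)

/-- `Φ` maps the class `S` into itself. -/
def Preserves (S : Set C) (Φ : C ⥤ C) : Prop := ∀ X ∈ S, Φ.obj X ∈ S

section TStructure

/-- `(le, ge)` is a t-structure on the full triangulated subcategory of `C`
determined by `S` (take `S = Set.univ` for a t-structure on `C`). -/
structure IsTStructureIn (S le ge : Set C) : Prop where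
  le_sub : le ⊆ S
  ge_sub : ge ⊆ S
  le_iso : ∀ ⦃X Y : C⦄, (X ≅ Y) → X ∈ le → Y ∈ le
  ge_iso : ∀ ⦃X Y : C⦄, (X ≅ Y) → X ∈ ge → Y ∈ ge
  shift_le : ∀ X ∈ le, X⟦(1 : ℤ)⟧ ∈ le
  shift_ge : ∀ X ∈ ge, X⟦(-1 : ℤ)⟧ ∈ ge
  hom_zero : ∀ X ∈ le, ∀ Y : C, Y⟦(1 : ℤ)⟧ ∈ ge → ∀ f : X ⟶ Y, f = 0
  exists_triangle : ∀ E ∈ S, ∃ (D' F' : C), D' ∈ le ∧ F'⟦(1 : ℤ)⟧ ∈ ge ∧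
    ∃ (f : D' ⟶ E) (g : E ⟶ F') (h : F' ⟶ D'⟦(1 : ℤ)⟧),
      Triangle.mk f g h ∈ distTriang C

/-- Boundedness of a (co-)t-structure `(P, Q)` on the subcategory determined
by `S` : every object of `S` lies in some shift of `P` and in some shift of `Q`. -/
def IsBoundedIn (S P Q : Set C) : Prop :=
  ∀ E ∈ S, (∃ k : ℤ, E⟦k⟧ ∈ P) ∧ (∃ k : ℤ, E⟦k⟧ ∈ Q)

/-- The heart of a t-structure. -/
def heart (le ge : Set C) : Set C := le ∩ ge

/-- `X` is a simple object of the heart `H` : it is a nonzero object of `H`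
and in every extension `A → X → B` with `A, B ∈ H`, `A` or `B` vanishes. -/
def SimpleIn (H : Set C) (X : C) : Prop :=
  X ∈ H ∧ ¬ IsZero X ∧ ∀ A B : C, A ∈ H → B ∈ H →
    (∃ (f : A ⟶ X) (g : X ⟶ B) (h : B ⟶ A⟦(1 : ℤ)⟧),
      Triangle.mk f g h ∈ distTriang C) →
    IsZero A ∨ IsZero B

/-- `X` (an object of the heart `H`) has length `n`, i.e. admits a composition
series with `n` simple factors. -/
def HasLengthIn (H : Set C) (X : C) (n : ℕ) : Prop :=
  ∃ S : Fin n → C, (∀ i, SimpleIn C H (S i)) ∧ HasFiltrationIn C Set.univ X S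

/-- The heart `H` is finite : it is a length category having only finitely
many isomorphism classes of simple objects. -/
def FiniteHeart (H : Set C) : Prop :=
  (∀ X ∈ H, ∃ n : ℕ, HasLengthIn C H X n) ∧
  ∃ (n : ℕ) (S : Fin n → C), (∀ i, SimpleIn C H (S i)) ∧
    (∀ i j, i ≠ j → IsEmpty (S i ≅ S j)) ∧
    ∀ T, SimpleIn C H T → ∃ i, Nonempty (T ≅ S i)

/-- The invariant `δ̂_t` associated with a bounded t-structure with finite
heart `H` : the value `∑ λ(E i) * exp (k i * t)` on the (essentially unique)
t-filtration of `E`, with factors `(X i)⟦k i⟧`, `X i ∈ H`, `k` strictly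
decreasing (encoded as an infimum over all such filtrations). -/
noncomputable def tComplexity (H : Set C) (t : ℝ) (E : C) : ℝ≥0∞ :=
  sInf { c | ∃ (m : ℕ) (k : Fin m → ℤ) (X : Fin m → C) (lam : Fin m → ℕ),
    StrictAnti k ∧ (∀ i, X i ∈ H) ∧ (∀ i, HasLengthIn C H (X i) (lam i)) ∧
    HasFiltrationIn C Set.univ E (fun i => (X i)⟦k i⟧) ∧
    c = ENNReal.ofReal (∑ i, (lam i : ℝ) * Real.exp ((k i : ℝ) * t)) }

/-- The entropy-type invariant `ĥ_t` associated with a bounded t-structure with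
finite heart `H`, for the subcategory determined by `S` :
`sup_{E ∈ S} limsup_N (1/N) log δ̂_t(Φ^N E)`. -/
noncomputable def tEntropyIn (S H : Set C) (Φ : C ⥤ C) (t : ℝ) : EReal :=
  ⨆ E : {X : C // X ∈ S},
    Filter.limsup
      (entSeq (fun N => tComplexity C H t ((iter Φ N).obj E.1))) Filter.atTop

end TStructure

section CoTStructure

/-- `(ge, le)` is a co-t-structure on the full triangulated subcategory of `C`
determined by `S` (take `S = Set.univ` for a co-t-structure on `C`). -/
structure IsCoTStructureIn (S ge le : Set C) : Prop where
  ge_sub : ge ⊆ S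
  le_sub : le ⊆ S
  ge_iso : ∀ ⦃X Y : C⦄, (X ≅ Y) → X ∈ ge → Y ∈ ge
  le_iso : ∀ ⦃X Y : C⦄, (X ≅ Y) → X ∈ le → Y ∈ le
  ge_summand : ∀ X Y : C, (X ⊞ Y) ∈ ge → X ∈ ge
  le_summand : ∀ X Y : C, (X ⊞ Y) ∈ le → X ∈ le
  shift_ge : ∀ X ∈ ge, X⟦(-1 : ℤ)⟧ ∈ ge
  shift_le : ∀ X ∈ le, X⟦(1 : ℤ)⟧ ∈ le
  hom_zero : ∀ X : C, X⟦(1 : ℤ)⟧ ∈ ge → ∀ Y ∈ le, ∀ f : X ⟶ Y, f = 0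
  exists_triangle : ∀ E ∈ S, ∃ (D' F' : C), D'⟦(1 : ℤ)⟧ ∈ ge ∧ F' ∈ le ∧
    ∃ (f : D' ⟶ E) (g : E ⟶ F') (h : F' ⟶ D'⟦(1 : ℤ)⟧),
      Triangle.mk f g h ∈ distTriang C

/-- The co-heart of a co-t-structure. -/
def coheart (ge le : Set C) : Set C := ge ∩ le

/-- `X` is an indecomposable object of the co-heart `H`. -/
def IndecIn (H : Set C) (X : C) : Prop :=
  X ∈ H ∧ ¬ IsZero X ∧ ∀ A B : C, Nonempty (X ≅ A ⊞ B) → IsZero A ∨ IsZero B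

/-- `X` (an object of the co-heart `H`) is a direct sum of `n` indecomposable
objects, i.e. `σ(X) = n`. -/
def HasSummandCountIn (H : Set C) (X : C) (n : ℕ) : Prop :=
  ∃ M : Fin n → C, (∀ i, IndecIn C H (M i)) ∧ Nonempty (X ≅ ⨁ M)

/-- The co-heart `H` is finite : it is a Krull–Schmidt category (decompositions
into indecomposables exist and are essentially unique) having only finitely many
isomorphism classes of indecomposable objects. -/
def FiniteCoheart (H : Set C) : Prop :=
  (∀ X ∈ H, ∃ n : ℕ, HasSummandCountIn C H X n) ∧
  (∀ X ∈ H, ∀ (n m : ℕ) (M : Fin n → C) (N : Fin m → C),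
    (∀ i, IndecIn C H (M i)) → (∀ j, IndecIn C H (N j)) →
    Nonempty (X ≅ ⨁ M) → Nonempty (X ≅ ⨁ N) →
    ∃ e : Fin n ≃ Fin m, ∀ i, Nonempty (M i ≅ N (e i))) ∧
  ∃ (n : ℕ) (M : Fin n → C), (∀ i, IndecIn C H (M i)) ∧
    (∀ i j, i ≠ j → IsEmpty (M i ≅ M j)) ∧
    ∀ T, IndecIn C H T → ∃ i, Nonempty (T ≅ M i)

/-- The invariant `δ̌_t` associated with a bounded co-t-structure with finite
co-heart `H` : the infimum, over all co-t-filtrations of `E` (filtrations with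
factors `(X i)⟦k i⟧`, `X i ∈ H`, `k` strictly increasing), of
`∑ σ(X i) * exp (k i * t)`. -/
noncomputable def coComplexity (H : Set C) (t : ℝ) (E : C) : ℝ≥0∞ :=
  sInf { c | ∃ (m : ℕ) (k : Fin m → ℤ) (X : Fin m → C) (s : Fin m → ℕ),
    StrictMono k ∧ (∀ i, X i ∈ H) ∧ (∀ i, HasSummandCountIn C H (X i) (s i)) ∧
    HasFiltrationIn C Set.univ E (fun i => (X i)⟦k i⟧) ∧
    c = ENNReal.ofReal (∑ i, (s i : ℝ) * Real.exp ((k i : ℝ) * t)) }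

/-- The entropy-type invariant `ȟ_t` associated with a bounded co-t-structure
with finite co-heart `H`, for the subcategory determined by `S`. -/
noncomputable def coEntropyIn (S H : Set C) (Φ : C ⥤ C) (t : ℝ) : EReal :=
  ⨆ E : {X : C // X ∈ S},
    Filter.limsup
      (entSeq (fun N => coComplexity C H t ((iter Φ N).obj E.1))) Filter.atTop

end CoTStructure

end CatEnt

open CatEnt

namespace CoSub

/-! ### Distinguished triangles -/

section Triangles

variable {D : Type u} [Category.{v} D] [Preadditive D] [HasZeroObject D] [HasShift D ℤ]
  [∀ n : ℤ, (shiftFunctor D n).Additive] [Pretriangulated D]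

open scoped ZeroObject

/-- `X ⟶ Y ⟶ Z` extends to a distinguished triangle, for some connecting morphism. -/
def Tri {X Y Z : D} (f : X ⟶ Y) (g : Y ⟶ Z) : Prop :=
  ∃ h : Z ⟶ X⟦(1 : ℤ)⟧, Triangle.mk f g h ∈ distTriang D

lemma Tri.zero {X Y Z : D} {f : X ⟶ Y} {g : Y ⟶ Z} (H : Tri f g) : f ≫ g = 0 := by
  obtain ⟨h, H⟩ := H
  exact comp_distTriang_mor_zero₁₂ _ H

lemma Tri.lift {X Y Z W : D} {f : X ⟶ Y} {g : Y ⟶ Z} (H : Tri f g) (k : W ⟶ Y)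
    (hk : k ≫ g = 0) : ∃ l : W ⟶ X, k = l ≫ f := by
  obtain ⟨h, H⟩ := H
  exact Triangle.coyoneda_exact₂ _ H k hk

lemma Tri.desc {X Y Z W : D} {f : X ⟶ Y} {g : Y ⟶ Z} (H : Tri f g) (k : Y ⟶ W)
    (hk : f ≫ k = 0) : ∃ l : Z ⟶ W, k = g ≫ l := by
  obtain ⟨h, H⟩ := H
  exact Triangle.yoneda_exact₂ _ H k hk

lemma exists_fiber {Y Z : D} (g : Y ⟶ Z) : ∃ (X : D) (f : X ⟶ Y), Tri f g := by
  obtain ⟨X, f, h, H⟩ := distinguished_cocone_triangle₁ g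
  exact ⟨X, f, h, H⟩

lemma Tri.of_iso {X Y Z X' Y' Z' : D} {f : X ⟶ Y} {g : Y ⟶ Z} {f' : X' ⟶ Y'} {g' : Y' ⟶ Z'}
    (H : Tri f g) (a : X ≅ X') (b : Y ≅ Y') (c : Z ≅ Z')
    (h₁ : f ≫ b.hom = a.hom ≫ f') (h₂ : g ≫ c.hom = b.hom ≫ g') : Tri f' g' := by
  obtain ⟨h, H⟩ := H
  refine ⟨c.inv ≫ h ≫ a.hom⟦(1 : ℤ)⟧', isomorphic_distinguished _ H _ ?_⟩
  exact (Triangle.isoMk (Triangle.mk f g h) (Triangle.mk f' g' _) a b c h₁ h₂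
    (c.hom_inv_id_assoc (h ≫ a.hom⟦(1 : ℤ)⟧')).symm).symm

lemma Tri.iso₁ {X Y Z X' : D} {f : X ⟶ Y} {g : Y ⟶ Z} (H : Tri f g) (a : X ≅ X') :
    Tri (a.inv ≫ f) g :=
  H.of_iso a (Iso.refl _) (Iso.refl _) (by simp) (by simp)

lemma Tri.iso₂ {X Y Z Y' : D} {f : X ⟶ Y} {g : Y ⟶ Z} (H : Tri f g) (b : Y ≅ Y') :
    Tri (f ≫ b.hom) (b.inv ≫ g) :=
  H.of_iso (Iso.refl _) b (Iso.refl _) (by simp) (by simp)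

lemma Tri.iso₃ {X Y Z Z' : D} {f : X ⟶ Y} {g : Y ⟶ Z} (H : Tri f g) (c : Z ≅ Z') :
    Tri f (g ≫ c.hom) :=
  H.of_iso (Iso.refl _) (Iso.refl _) c (by simp) (by simp)

lemma Tri.fiber_iso {X Y Z X' Y' Z' : D} {f : X ⟶ Y} {g : Y ⟶ Z} {f' : X' ⟶ Y'} {g' : Y' ⟶ Z'}
    (H : Tri f g) (H' : Tri f' g') (b : Y ≅ Y') (c : Z ≅ Z')
    (h₂ : g ≫ c.hom = b.hom ≫ g') : Nonempty (X ≅ X') := by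
  obtain ⟨h, H⟩ := H
  obtain ⟨h', H'⟩ := H'
  obtain ⟨a, ha, ha'⟩ : ∃ a : X ⟶ X', f ≫ b.hom = a ≫ f' ∧ h ≫ a⟦(1 : ℤ)⟧' = c.hom ≫ h' :=
    complete_distinguished_triangle_morphism₁ _ _ H H' b.hom c.hom h₂
  let φ : Triangle.mk f g h ⟶ Triangle.mk f' g' h' := Triangle.homMk _ _ a b.hom c.hom ha h₂ ha'
  have : IsIso a := isIso₁_of_isIso₂₃ φ H H' (inferInstanceAs (IsIso b.hom))
    (inferInstanceAs (IsIso c.hom))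
  exact ⟨asIso a⟩

lemma Tri.id_left (X : D) {Z : D} (hZ : IsZero Z) : Tri (𝟙 X) (0 : X ⟶ Z) := by
  have : Tri (𝟙 X) (0 : X ⟶ 0) := ⟨0, contractible_distinguished X⟩
  exact this.of_iso (Iso.refl _) (Iso.refl _) (Limits.isZero_zero D |>.iso hZ) (by simp) (by simp)

lemma Tri.id_right (X : D) {Z : D} (hZ : IsZero Z) : Tri (0 : Z ⟶ X) (𝟙 X) := by
  have : Tri (0 : (0 : D) ⟶ X) (𝟙 X) := ⟨0, contractible_distinguished₁ X⟩
  exact this.of_iso (Limits.isZero_zero D |>.iso hZ) (Iso.refl _) (Iso.refl _) (by simp) (by simp)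

lemma Tri.shift_zero (W : D) {Z : D} (hZ : IsZero Z) :
    Tri (0 : W ⟶ Z) (0 : Z ⟶ W⟦(1 : ℤ)⟧) := by
  have h := rot_of_distTriang _ (contractible_distinguished W)
  have : Tri (0 : W ⟶ (0 : D)) (0 : (0 : D) ⟶ W⟦(1 : ℤ)⟧) := ⟨_, h⟩
  exact this.of_iso (Iso.refl _) (Limits.isZero_zero D |>.iso hZ) (Iso.refl _) (by simp) (by simp)

lemma Tri.isIso_left {X Y Z : D} {f : X ⟶ Y} {g : Y ⟶ Z} (H : Tri f g) (hZ : IsZero Z) :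
    IsIso f := by
  obtain ⟨h, H⟩ := H
  exact (Triangle.isZero₃_iff_isIso₁ _ H).1 hZ

lemma Tri.isIso_right {X Y Z : D} {f : X ⟶ Y} {g : Y ⟶ Z} (H : Tri f g) (hX : IsZero X) :
    IsIso g := by
  obtain ⟨h, H⟩ := H
  exact (Triangle.isZero₁_iff_isIso₂ _ H).1 hX

lemma Tri.isZero_mid {X Y Z : D} {f : X ⟶ Y} {g : Y ⟶ Z} (H : Tri f g) (hX : IsZero X)
    (hZ : IsZero Z) : IsZero Y := by
  obtain ⟨h, H⟩ := H
  exact Triangle.isZero₂_of_isZero₁₃ _ H hX hZ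

/-- A split monomorphism is the inclusion of a direct summand. -/
lemma retract_biprod [HasBinaryBiproducts D] {X W : D} (i : X ⟶ W) (r : W ⟶ X)
    (hir : i ≫ r = 𝟙 X) : ∃ Z : D, Nonempty (W ≅ X ⊞ Z) := by
  obtain ⟨Z, σ, h, H⟩ := distinguished_cocone_triangle i
  have : Mono (Triangle.mk i σ h).mor₁ := (SplitMono.mk r hir).mono
  have h0 := (Triangle.mor₃_eq_zero_iff_mono₁ _ H).2 this
  obtain ⟨e, _⟩ := exists_iso_binaryBiproduct_of_distTriang _ H h0
  exact ⟨Z, ⟨e⟩⟩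

/-- A split monomorphism has a complement compatible with the given retraction. -/
lemma split_mono_complement {X W : D} (i : X ⟶ W) (r : W ⟶ X) (hir : i ≫ r = 𝟙 X) :
    ∃ (V : D) (σ : W ⟶ V) (τ : V ⟶ W), τ ≫ σ = 𝟙 V ∧ i ≫ σ = 0 ∧ τ ≫ r = 0 ∧
      r ≫ i + σ ≫ τ = 𝟙 W := by
  obtain ⟨V, σ, h, H⟩ := distinguished_cocone_triangle i
  have hm : Mono (Triangle.mk i σ h).mor₁ := (SplitMono.mk r hir).mono
  have h0 : h = 0 := (Triangle.mor₃_eq_zero_iff_mono₁ _ H).2 hm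
  have T : Tri i σ := ⟨h, H⟩
  obtain ⟨τ, hτ⟩ := T.desc (𝟙 W - r ≫ i) (by simp [reassoc_of% hir])
  have he : Epi (Triangle.mk i σ h).mor₂ := Triangle.epi₂ _ H h0
  have he : Epi σ := he
  have hi := T.zero
  refine ⟨V, σ, τ, ?_, hi, ?_, ?_⟩
  · rw [← cancel_epi σ, ← Category.assoc, ← hτ]
    simp [hi]
  · rw [← cancel_epi σ, ← Category.assoc, ← hτ]
    simp [hir]
  · rw [← hτ]; simp

/-- The biproduct of a pair as a product over `WalkingPair`. -/
noncomputable def biprodIsoPi [HasFiniteBiproducts D] (F : WalkingPair → D) :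
    F .left ⊞ F .right ≅ ∏ᶜ F where
  hom := Pi.lift (fun j => WalkingPair.casesOn j biprod.fst biprod.snd)
  inv := biprod.lift (Pi.π F .left) (Pi.π F .right)
  hom_inv_id := by ext <;> simp
  inv_hom_id := by
    apply Pi.hom_ext
    rintro (_ | _) <;> simp

lemma biprodIsoPi_naturality [HasFiniteBiproducts D] {F G : WalkingPair → D}
    (α : ∀ j, F j ⟶ G j) :
    Limits.Pi.map α ≫ (biprodIsoPi G).inv =
      (biprodIsoPi F).inv ≫ biprod.map (α .left) (α .right) := by
  ext <;> simp [biprodIsoPi]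

/-- The sum of two distinguished triangles. -/
lemma Tri.sum [HasFiniteBiproducts D] {X₁ Y₁ Z₁ X₂ Y₂ Z₂ : D} {f₁ : X₁ ⟶ Y₁} {g₁ : Y₁ ⟶ Z₁}
    {f₂ : X₂ ⟶ Y₂} {g₂ : Y₂ ⟶ Z₂} (H₁ : Tri f₁ g₁) (H₂ : Tri f₂ g₂) :
    Tri (biprod.map f₁ f₂) (biprod.map g₁ g₂) := by
  obtain ⟨h₁, H₁⟩ := H₁
  obtain ⟨h₂, H₂⟩ := H₂
  let T : WalkingPair → Triangle D := fun j =>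
    WalkingPair.casesOn j (Triangle.mk f₁ g₁ h₁) (Triangle.mk f₂ g₂ h₂)
  have hT : ∀ j, T j ∈ distTriang D := by rintro (_ | _) <;> assumption
  have P : Tri (Limits.Pi.map (fun j => (T j).mor₁)) (Limits.Pi.map (fun j => (T j).mor₂)) :=
    ⟨_, productTriangle_distinguished T hT⟩
  exact P.of_iso (biprodIsoPi (fun j => (T j).obj₁)).symm (biprodIsoPi (fun j => (T j).obj₂)).symm
    (biprodIsoPi (fun j => (T j).obj₃)).symm (biprodIsoPi_naturality fun j => (T j).mor₁)
    (biprodIsoPi_naturality fun j => (T j).mor₂)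

end Triangles

set_option linter.unusedSectionVars false

/-! ### Orthogonality for co-t-structures -/

section CoTStructure

variable {D : Type u} [Category.{v} D] [Preadditive D] [HasZeroObject D] [HasShift D ℤ]
  [∀ n : ℤ, (shiftFunctor D n).Additive] [Pretriangulated D] [HasFiniteBiproducts D]
  {ge le : Set D}

/-- Composition of two shifts. -/
noncomputable def shiftIso (X : D) (a b c : ℤ) (h : a + b = c) : X⟦a⟧⟦b⟧ ≅ X⟦c⟧ :=
  ((shiftFunctorAdd' D a b c h).app X).symm

/-- The shift by zero is the identity. -/
noncomputable def shift0 (X : D) : X⟦(0 : ℤ)⟧ ≅ X := (shiftFunctorZero D ℤ).app X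

lemma zero_of_shift_zero {X Y : D} (n : ℤ) {f : X ⟶ Y} (h : f⟦n⟧' = 0) : f = 0 :=
  (shiftFunctor D n).map_injective (by simpa using h)

lemma ge_of_retract (hco : IsCoTStructureIn D Set.univ ge le) {X W : D} (i : X ⟶ W) (r : W ⟶ X)
    (h : i ≫ r = 𝟙 X) (hW : W ∈ ge) : X ∈ ge := by
  obtain ⟨Z, ⟨e⟩⟩ := retract_biprod i r h
  exact hco.ge_summand X Z (hco.ge_iso e hW)

lemma le_of_retract (hco : IsCoTStructureIn D Set.univ ge le) {X W : D} (i : X ⟶ W) (r : W ⟶ X)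
    (h : i ≫ r = 𝟙 X) (hW : W ∈ le) : X ∈ le := by
  obtain ⟨Z, ⟨e⟩⟩ := retract_biprod i r h
  exact hco.le_summand X Z (hco.le_iso e hW)

lemma le_shift (hco : IsCoTStructureIn D Set.univ ge le) {X : D} (hX : X ∈ le) (n : ℕ) :
    X⟦(n : ℤ)⟧ ∈ le := by
  induction n with
  | zero => exact hco.le_iso (shift0 X).symm hX
  | succ n ih => exact hco.le_iso (shiftIso X n 1 _ (by push_cast; rfl)) (hco.shift_le _ ih)

/-- Orthogonality of a co-t-structure, for arbitrary shifts. -/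
lemma hom_shift_zero (hco : IsCoTStructureIn D Set.univ ge le) {X T : D} (hX : X ∈ ge)
    (hT : T ∈ le) {p q : ℤ} (hpq : p < q) (f : X⟦p⟧ ⟶ T⟦q⟧) : f = 0 := by
  apply zero_of_shift_zero (-p - 1)
  apply hco.hom_zero
  · exact hco.ge_iso ((shiftFunctor D (1 : ℤ)).mapIso (shiftIso X p (-p - 1) (-1) (by ring)) ≪≫
      shiftIso X (-1) 1 0 (by ring) ≪≫ shift0 X).symm hX
  · obtain ⟨n, hn⟩ := Int.eq_ofNat_of_zero_le (show 0 ≤ q + (-p - 1) by lia)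
    exact hco.le_iso (shiftIso T q (-p - 1) _ hn).symm (le_shift hco hT n)

/-- An object without nonzero morphisms to `T⟦1⟧`, for all `T ∈ le`, lies in `ge`: the second map of
its shifted approximation triangle vanishes, so it is a retract of an object of `ge`. -/
lemma mem_ge (hco : IsCoTStructureIn D Set.univ ge le) {Y : D}
    (h : ∀ T ∈ le, ∀ f : Y ⟶ T⟦(1 : ℤ)⟧, f = 0) : Y ∈ ge := by
  obtain ⟨A, B, hA, hB, f, g, δ, H⟩ := hco.exists_triangle (Y⟦(-1 : ℤ)⟧) (Set.mem_univ _)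
  let e : Y⟦(-1 : ℤ)⟧⟦(1 : ℤ)⟧ ≅ Y := shiftIso Y (-1) 1 0 (by ring) ≪≫ shift0 Y
  have hg : g = 0 := by
    apply zero_of_shift_zero 1
    rw [← cancel_epi e.inv, comp_zero]
    exact h B hB _
  obtain ⟨s, hs⟩ := Tri.lift ⟨δ, H⟩ (𝟙 _) (by rw [hg, comp_zero])
  refine ge_of_retract hco (e.inv ≫ s⟦(1 : ℤ)⟧') (f⟦(1 : ℤ)⟧' ≫ e.hom) ?_ hA
  rw [Category.assoc, ← Functor.map_comp_assoc, ← hs]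
  simp

/-- An object without nonzero morphisms from the desuspension of an object of `ge` lies in `le`. -/
lemma mem_le (hco : IsCoTStructureIn D Set.univ ge le) {Y : D}
    (h : ∀ Z : D, Z⟦(1 : ℤ)⟧ ∈ ge → ∀ f : Z ⟶ Y, f = 0) : Y ∈ le := by
  obtain ⟨A, B, hA, hB, f, g, δ, H⟩ := hco.exists_triangle Y (Set.mem_univ _)
  obtain ⟨s, hs⟩ := Tri.desc ⟨δ, H⟩ (𝟙 Y) (by rw [h A hA f, zero_comp])
  exact le_of_retract hco g s hs.symm hB

lemma mem_ge_shift (hco : IsCoTStructureIn D Set.univ ge le) {Y : D} (N : ℤ)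
    (h : ∀ T ∈ le, ∀ f : Y ⟶ T⟦N + 1⟧, f = 0) : Y⟦-N⟧ ∈ ge := by
  refine mem_ge hco fun T hT f => ?_
  apply zero_of_shift_zero N
  rw [← cancel_epi (shiftIso Y (-N) N 0 (by ring) ≪≫ shift0 Y).inv,
    ← cancel_mono (shiftIso T 1 N (N + 1) (by ring)).hom, comp_zero, zero_comp, Category.assoc]
  exact h T hT _

lemma mem_le_shift (hco : IsCoTStructureIn D Set.univ ge le) {Y : D} (N : ℤ)
    (h : ∀ X ∈ ge, ∀ f : X⟦N - 1⟧ ⟶ Y, f = 0) : Y⟦-N⟧ ∈ le := by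
  refine mem_le hco fun Z hZ f => ?_
  apply zero_of_shift_zero N
  rw [← cancel_epi (shiftIso Z 1 (N - 1) N (by ring)).hom,
    ← cancel_mono (shiftIso Y (-N) N 0 (by ring) ≪≫ shift0 Y).hom, comp_zero, zero_comp]
  exact h _ hZ _

lemma coheart_iso (hco : IsCoTStructureIn D Set.univ ge le) {X Y : D} (e : X ≅ Y)
    (h : X ∈ coheart D ge le) : Y ∈ coheart D ge le :=
  ⟨hco.ge_iso e h.1, hco.le_iso e h.2⟩

lemma coheart_biprod (hco : IsCoTStructureIn D Set.univ ge le) {X Y : D}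
    (hX : X ∈ coheart D ge le) (hY : Y ∈ coheart D ge le) : (X ⊞ Y) ∈ coheart D ge le := by
  constructor
  · refine mem_ge hco fun T hT f => ?_
    have key : ∀ W ∈ ge, ∀ g : W ⟶ T⟦(1 : ℤ)⟧, g = 0 := fun W hW g => by
      rw [← cancel_epi (shift0 W).hom, hom_shift_zero hco hW hT one_pos ((shift0 W).hom ≫ g),
        comp_zero]
    ext
    · simp [key X hX.1]
    · simp [key Y hY.1]
  · refine mem_le hco fun Z hZ f => ?_
    ext
    · simp [hco.hom_zero Z hZ X hX.2]
    · simp [hco.hom_zero Z hZ Y hY.2]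

lemma zero_mem_coheart (hco : IsCoTStructureIn D Set.univ ge le) {Z : D} (hZ : IsZero Z) :
    Z ∈ coheart D ge le :=
  ⟨mem_ge hco fun _ _ f => hZ.eq_of_src f 0, mem_le hco fun _ _ f => hZ.eq_of_tgt f 0⟩

lemma coheart_of_retract (hco : IsCoTStructureIn D Set.univ ge le) {X W : D} (i : X ⟶ W)
    (r : W ⟶ X) (h : i ≫ r = 𝟙 X) (hW : W ∈ coheart D ge le) : X ∈ coheart D ge le :=
  ⟨ge_of_retract hco i r h hW.1, le_of_retract hco i r h hW.2⟩

/-! ### Counting indecomposable summands -/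

lemma count_iso {H : Set D} {X Y : D} (e : X ≅ Y) {n : ℕ} (h : HasSummandCountIn D H X n) :
    HasSummandCountIn D H Y n := by
  obtain ⟨M, hM, ⟨f⟩⟩ := h
  exact ⟨M, hM, ⟨e.symm ≪≫ f⟩⟩

lemma count_zero (H : Set D) {X : D} (hX : IsZero X) : HasSummandCountIn D H X 0 := by
  refine ⟨fun i => i.elim0, fun i => i.elim0, ⟨hX.iso ?_⟩⟩
  rw [IsZero.iff_id_eq_zero]
  apply biproduct.hom_ext
  exact fun i => i.elim0

/-- A finite biproduct over a disjoint union is the sum of the two partial biproducts. -/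
noncomputable def biproductSumIso {m n : ℕ} (F : Fin m ⊕ Fin n → D) :
    (⨁ fun i => F (.inl i)) ⊞ (⨁ fun j => F (.inr j)) ≅ ⨁ F where
  hom := biprod.desc (biproduct.desc fun i => biproduct.ι F (.inl i))
    (biproduct.desc fun i => biproduct.ι F (.inr i))
  inv := biprod.lift (biproduct.lift fun i => biproduct.π F (.inl i))
    (biproduct.lift fun i => biproduct.π F (.inr i))
  hom_inv_id := by
    ext i j <;> simp [biproduct.ι_π]
  inv_hom_id := by
    rw [biprod.lift_desc, biproduct.lift_desc, biproduct.lift_desc, ← biproduct.total,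
      Fintype.sum_sum_type]

lemma count_biprod {H : Set D} {X Y : D} {p q : ℕ} (hX : HasSummandCountIn D H X p)
    (hY : HasSummandCountIn D H Y q) : HasSummandCountIn D H (X ⊞ Y) (p + q) := by
  obtain ⟨M, hM, ⟨e⟩⟩ := hX
  obtain ⟨N, hN, ⟨f⟩⟩ := hY
  refine ⟨fun k => Sum.elim M N (finSumFinEquiv.symm k), fun k => ?_,
    ⟨biprod.mapIso e f ≪≫ biproductSumIso (Sum.elim M N) ≪≫ biproduct.whiskerEquiv finSumFinEquiv
      (fun j => eqToIso (by simp))⟩⟩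
  change IndecIn D H (Sum.elim M N (finSumFinEquiv.symm k))
  rcases finSumFinEquiv.symm k with i | i
  · exact hM i
  · exact hN i

/-- The number of indecomposable summands is well defined, by the Krull–Schmidt property. -/
lemma count_unique {H : Set D} (hfin : FiniteCoheart D H) {X : D} (hX : X ∈ H) {p q : ℕ}
    (hp : HasSummandCountIn D H X p) (hq : HasSummandCountIn D H X q) : p = q := by
  obtain ⟨M, hM, e⟩ := hp
  obtain ⟨N, hN, f⟩ := hq
  obtain ⟨σ, _⟩ := hfin.2.1 X hX p q M N hM hN e f
  simpa using Fintype.card_congr σ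

/-- In the co-heart, a complement of a direct summand with `q` indecomposable summands has `q` fewer
indecomposable summands than the whole. -/
lemma count_summand (hco : IsCoTStructureIn D Set.univ ge le)
    (hfin : FiniteCoheart D (coheart D ge le)) {X A B : D} (e : X ≅ A ⊞ B)
    (hX : X ∈ coheart D ge le) {p q : ℕ}
    (hp : HasSummandCountIn D (coheart D ge le) X p)
    (hq : HasSummandCountIn D (coheart D ge le) B q) :
    A ∈ coheart D ge le ∧ ∃ r, HasSummandCountIn D (coheart D ge le) A r ∧ p = r + q := by
  have hA : A ∈ coheart D ge le :=
    coheart_of_retract hco (biprod.inl ≫ e.inv) (e.hom ≫ biprod.fst) (by simp) hX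
  obtain ⟨r, hr⟩ := hfin.1 A hA
  exact ⟨hA, r, hr, count_unique hfin hX hp (count_iso e.symm (count_biprod hr hq))⟩

end CoTStructure

/-! ### Filtrations with factors in a window of degrees -/

section Filtrations

variable {D : Type u} [Category.{v} D] [Preadditive D] [HasZeroObject D] [HasShift D ℤ]
  [∀ n : ℤ, (shiftFunctor D n).Additive] [Pretriangulated D] [HasFiniteBiproducts D]
  {ge le : Set D}

open scoped ZeroObject

/-- A version of Schanuel's lemma: if two morphisms out of `E` factor through each other then their fibres
agree up to adding the desuspended targets. -/
lemma schanuel {R R' E X X' W W' : D} {r : R ⟶ E} {f : E ⟶ X} {r' : R' ⟶ E} {f' : E ⟶ X'}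
    (H : Tri r f) (H' : Tri r' f') (α : X ≅ W⟦(1 : ℤ)⟧) (α' : X' ≅ W'⟦(1 : ℤ)⟧)
    (h : X ⟶ X') (h' : X' ⟶ X) (hh : f' = f ≫ h) (hh' : f = f' ≫ h') :
    Nonempty (R ⊞ W' ≅ R' ⊞ W) := by
  have T₁ := (H.sum (Tri.shift_zero W' (isZero_zero D))).iso₃
    (biprod.mapIso (Iso.refl X) α'.symm)
  have T₂ := (H'.sum (Tri.shift_zero W (isZero_zero D))).iso₃
    (biprod.mapIso (Iso.refl X') α.symm)
  let c : X ⊞ X' ≅ X' ⊞ X :=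
    { hom := biprod.lift (biprod.fst ≫ h + biprod.snd)
        (biprod.fst - biprod.fst ≫ h ≫ h' - biprod.snd ≫ h')
      inv := biprod.lift (biprod.snd + biprod.fst ≫ h')
        (biprod.fst - biprod.snd ≫ h - biprod.fst ≫ h' ≫ h)
      hom_inv_id := by ext <;> simp
      inv_hom_id := by ext <;> simp }
  refine T₁.fiber_iso T₂ (Iso.refl _) c ?_
  have h2 : f - f ≫ h ≫ h' = 0 := by
    rw [← Category.assoc, ← hh, ← hh', sub_self]
  ext
  · simp [c, hh]
  · simp [c, h2]

/-- The weight `exp ((a + n) t)` of a summand of a factor in degree `a + n`. -/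
noncomputable def wt (a : ℤ) (t : ℝ) (n : ℕ) : ℝ := Real.exp (((a + n : ℤ) : ℝ) * t)

lemma wt_pos (a : ℤ) (t : ℝ) (n : ℕ) : 0 < wt a t n := Real.exp_pos _

/-- `Filt H a t n E x`: the object `E` has a filtration with one factor in `H⟦k⟧` for each
`k = a, a + 1, …, a + n - 1`, in this order (factors may vanish), of total weight `x`. -/
def Filt (H : Set D) (a : ℤ) (t : ℝ) : ℕ → D → ℝ → Prop
  | 0, E, x => IsZero E ∧ x = 0
  | n + 1, E, x => ∃ (R X : D) (y : ℝ) (s : ℕ) (f : R ⟶ E) (g : E ⟶ X⟦a + n⟧),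
      X ∈ H ∧ HasSummandCountIn D H X s ∧ Filt H a t n R y ∧ Tri f g ∧ x = y + s * wt a t n

lemma Filt.iso {H : Set D} {a : ℤ} {t : ℝ} {n : ℕ} {E E' : D} {x : ℝ} (h : Filt H a t n E x)
    (e : E ≅ E') : Filt H a t n E' x := by
  cases n with
  | zero => exact ⟨h.1.of_iso e.symm, h.2⟩
  | succ n =>
    obtain ⟨R, X, y, s, f, g, hX, hs, hR, hT, hx⟩ := h
    exact ⟨R, X, y, s, _, _, hX, hs, hR, hT.iso₂ e, hx⟩

lemma isZero_shift {Z : D} (hZ : IsZero Z) (n : ℤ) : IsZero (Z⟦n⟧) :=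
  (shiftFunctor D n).map_isZero hZ

lemma Filt.pad (hco : IsCoTStructureIn D Set.univ ge le) {a : ℤ} {t : ℝ} {n : ℕ} {E : D} {x : ℝ}
    (h : Filt (coheart D ge le) a t n E x) : Filt (coheart D ge le) a t (n + 1) E x :=
  ⟨E, 0, x, 0, 𝟙 E, 0, zero_mem_coheart hco (isZero_zero D), count_zero _ (isZero_zero D), h,
    Tri.id_left E (isZero_shift (isZero_zero D) _), by simp⟩

lemma Filt.zero (hco : IsCoTStructureIn D Set.univ ge le) {a : ℤ} {t : ℝ} (n : ℕ) {E : D}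
    (h : IsZero E) : Filt (coheart D ge le) a t n E 0 := by
  induction n with
  | zero => exact ⟨h, rfl⟩
  | succ n ih => exact ih.pad hco

/-- An object filtered in degrees below `a + n` has no morphisms to the right half shifted by
`a + n` or more. -/
lemma Filt.hom_zero (hco : IsCoTStructureIn D Set.univ ge le) {a : ℤ} {t : ℝ} {n : ℕ} {E : D}
    {x : ℝ} (h : Filt (coheart D ge le) a t n E x) {T : D} (hT : T ∈ le) {m : ℤ} (hm : a + n ≤ m)
    (f : E ⟶ T⟦m⟧) : f = 0 := by
  induction n generalizing E x with
  | zero => exact h.1.eq_of_src _ _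
  | succ n ih =>
    obtain ⟨R, X, y, s, i, p, hX, hs, hR, hT', hx⟩ := h
    obtain ⟨l, rfl⟩ := hT'.desc f (ih hR (by push_cast at hm; lia) _)
    rw [hom_shift_zero hco hX.1 hT (by push_cast at hm; lia) l, comp_zero]

/-- The shift functor commutes with binary biproducts. -/
noncomputable def shiftBiprod (X Y : D) (n : ℤ) : (X ⊞ Y)⟦n⟧ ≅ X⟦n⟧ ⊞ Y⟦n⟧ :=
  haveI := preservesBinaryBiproducts_of_preservesBiproducts (shiftFunctor D n)
  (shiftFunctor D n).mapBiprod X Y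

/-- Adding a direct summand concentrated in the top degree. -/
lemma Filt.add (hco : IsCoTStructureIn D Set.univ ge le) {a : ℤ} {t : ℝ} {n : ℕ} {P Q : D} {x : ℝ}
    {q : ℕ} (h : Filt (coheart D ge le) a t (n + 1) P x) (hQ : Q ∈ coheart D ge le)
    (hq : HasSummandCountIn D (coheart D ge le) Q q) :
    Filt (coheart D ge le) a t (n + 1) (P ⊞ Q⟦a + n⟧) (x + q * wt a t n) := by
  obtain ⟨R, X, y, s, f, g, hX, hs, hR, hT, hx⟩ := h
  have T := (hT.sum (Tri.id_right (Q⟦a + n⟧) (isZero_zero D))).iso₃ (shiftBiprod X Q (a + n)).symm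
  refine ⟨R ⊞ 0, X ⊞ Q, y, s + q, _, _, coheart_biprod hco hX hQ, count_biprod hs hq,
    hR.iso (isoBiprodZero (isZero_zero D)), T, ?_⟩
  rw [hx]; push_cast; ring

/-- Cancelling a direct summand concentrated in the top degree. -/
lemma Filt.cancel (hco : IsCoTStructureIn D Set.univ ge le)
    (hfin : FiniteCoheart D (coheart D ge le)) {a : ℤ} {t : ℝ} {n : ℕ} {P Q : D} {x : ℝ} {q : ℕ}
    (h : Filt (coheart D ge le) a t (n + 1) (P ⊞ Q⟦a + n⟧) x) (hQ : Q ∈ coheart D ge le)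
    (hq : HasSummandCountIn D (coheart D ge le) Q q) :
    Filt (coheart D ge le) a t (n + 1) P (x - q * wt a t n) := by
  obtain ⟨R, X, y, s, f, p, hX, hs, hR, hT, hx⟩ := h
  obtain ⟨r, hr⟩ := hT.desc biprod.snd (hR.hom_zero hco hQ.2 le_rfl _)
  have hir : (biprod.inr ≫ p) ≫ r = 𝟙 _ := by rw [Category.assoc, ← hr, biprod.inr_snd]
  obtain ⟨V, σ, τ, hτσ, hσ, hτr, htot⟩ := split_mono_complement (biprod.inr ≫ p) r hir
  let e : X⟦a + n⟧ ≅ V ⊞ Q⟦a + n⟧ :=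
    { hom := biprod.lift σ r
      inv := biprod.desc τ (biprod.inr ≫ p)
      hom_inv_id := by rw [biprod.lift_desc, ← htot]; exact add_comm _ _
      inv_hom_id := by
        ext
        · simpa using hτσ
        · simpa using hτr
        · simpa using hσ
        · simpa using hir }
  -- `V` is the shift of an object of the co-heart complementary to `Q` in `X`
  let N : ℤ := a + n
  let eX : X ≅ V⟦-N⟧ ⊞ Q :=
    (shiftIso X N (-N) 0 (by ring) ≪≫ shift0 X).symm ≪≫ (shiftFunctor D (-N)).mapIso e ≪≫
      shiftBiprod _ _ _ ≪≫ biprod.mapIso (Iso.refl _) (shiftIso Q N (-N) 0 (by ring) ≪≫ shift0 Q)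
  obtain ⟨hV, v, hv, rfl⟩ := count_summand hco hfin eX hX hs hq
  obtain ⟨R', f', T'⟩ := exists_fiber (biprod.inl ≫ p ≫ σ)
  have T'' := T'.sum (Tri.id_right (Q⟦a + n⟧) (isZero_zero D))
  obtain ⟨ρ⟩ := hT.fiber_iso T'' (Iso.refl _) e (by
    ext
    · simp [e]
    · simp [e, ← hr]
    · simpa [e] using hσ
    · simp [e, ← hr])
  refine ⟨R', V⟦-N⟧, y, v, _, _, hV, hv,
    hR.iso (ρ ≪≫ (isoBiprodZero (isZero_zero D)).symm),
    T'.iso₃ (shiftIso V (-N) N 0 (by ring) ≪≫ shift0 V).symm, ?_⟩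
  rw [hx]; push_cast; ring

/-- Let `E` be an extension of `Y₁⟦a + n⟧`, via `p`, by an object `E₁` filtered in degrees below
`a + n`. If `f : E ⟶ Y⟦a + n⟧` and `p` factor through each other, then `E` has a filtration of weight
at most the weight of `E₁` plus the weight of `Y⟦a + n⟧`. If `Y₁` has at most as many indecomposable
summands as `Y`, the given extension will do. Otherwise `f` replaces `p`: by Schanuel's lemma its
fibre is `E₁ ⊞ Y⟦a + n - 1⟧` with `Y₁⟦a + n - 1⟧` cancelled. -/
lemma Filt.min (hco : IsCoTStructureIn D Set.univ ge le)
    (hfin : FiniteCoheart D (coheart D ge le)) {a : ℤ} {t : ℝ} {n : ℕ} {E E₁ Y Y₁ : D} {x : ℝ}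
    {s s₁ : ℕ} (hE₁ : Filt (coheart D ge le) a t n E₁ x) {j : E₁ ⟶ E} {p : E ⟶ Y₁⟦a + n⟧}
    (hT : Tri j p) (hY₁ : Y₁ ∈ coheart D ge le)
    (hs₁ : HasSummandCountIn D (coheart D ge le) Y₁ s₁) (hY : Y ∈ coheart D ge le)
    (hs : HasSummandCountIn D (coheart D ge le) Y s) (f : E ⟶ Y⟦a + n⟧)
    (h : Y₁⟦a + n⟧ ⟶ Y⟦a + n⟧) (h' : Y⟦a + n⟧ ⟶ Y₁⟦a + n⟧) (hf : f = p ≫ h) (hp : p = f ≫ h') :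
    ∃ z ≤ x + s * wt a t n, Filt (coheart D ge le) a t (n + 1) E z := by
  have hw := wt_pos a t n
  rcases le_or_gt s₁ s with hle | hlt
  · refine ⟨x + s₁ * wt a t n, ?_, E₁, Y₁, x, s₁, j, p, hY₁, hs₁, hE₁, hT, rfl⟩
    gcongr
  cases n with
  | zero =>
    -- here `p` is invertible, so that `Y₁` is a direct summand of `Y`, contrary to `s < s₁`
    exfalso
    have := hT.isIso_right hE₁.1
    have hhh : h ≫ h' = 𝟙 _ := by
      rw [← cancel_epi p, ← Category.assoc, ← hf, ← hp, Category.comp_id]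
    obtain ⟨Z, ⟨e⟩⟩ := retract_biprod ((shiftFunctor D _).preimage h)
      ((shiftFunctor D _).preimage h') ((shiftFunctor D (a + (0 : ℕ))).map_injective
        (by simpa using hhh))
    obtain ⟨_, r, _, hr⟩ := count_summand hco hfin (e ≪≫ biprod.braiding _ _) hY hs hs₁
    lia
  | succ n =>
    obtain ⟨R, i, hR⟩ := exists_fiber f
    have hN : a + (n : ℤ) + 1 = a + ((n + 1 : ℕ) : ℤ) := by push_cast; ring
    obtain ⟨e⟩ := schanuel hT hR (shiftIso Y₁ _ _ _ hN).symm (shiftIso Y _ _ _ hN).symm h h' hf hp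
    have key := ((hE₁.add hco hY hs).iso e).cancel hco hfin hY₁ hs₁
    refine ⟨_, ?_, R, Y, _, s, i, f, hY, hs, key, hR, rfl⟩
    have hw' := wt_pos a t n
    have : (s : ℝ) ≤ s₁ := by exact_mod_cast hlt.le
    nlinarith

end Filtrations

/-! ### Extensions of filtered objects -/

section Main

variable {D : Type u} [Category.{v} D] [Preadditive D] [HasZeroObject D] [HasShift D ℤ]
  [∀ n : ℤ, (shiftFunctor D n).Additive] [Pretriangulated D] [HasFiniteBiproducts D]
  {ge le : Set D}

lemma Tri.lift_shift {X Y Z W : D} {f : X ⟶ Y} {g : Y ⟶ Z} (H : Tri f g) (k : W ⟶ Y⟦(1 : ℤ)⟧)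
    (hk : k ≫ g⟦(1 : ℤ)⟧' = 0) : ∃ l : W ⟶ X⟦(1 : ℤ)⟧, k = l ≫ f⟦(1 : ℤ)⟧' := by
  obtain ⟨h, H⟩ := H
  obtain ⟨l, hl⟩ : ∃ l : W ⟶ X⟦(1 : ℤ)⟧, k = l ≫ ((1 : ℤ).negOnePow • f⟦(1 : ℤ)⟧') :=
    Triangle.coyoneda_exact₂ _ (Triangle.shift_distinguished _ H 1) k
      (show k ≫ ((1 : ℤ).negOnePow • g⟦(1 : ℤ)⟧') = 0 by simp [hk])
  exact ⟨-l, by simpa using hl⟩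

/-- The diagram chase behind the fact that the cone of `E₀ ⟶ E` lies in the shifted co-heart.
Here `E₀` is an extension of the truncations `B` of `F` and `A` of `D'` compatible with the
extension `E` of `F` and `D'`; an object without morphisms to the cones of `A ⟶ D'` and `B ⟶ F`
has no morphisms to the cone of `E₀ ⟶ E`. -/
lemma cone_orthogonal {D' E F A B E₀ X Y Y' Z : D} {u : D' ⟶ E} {v : E ⟶ F}
    {w : F ⟶ D'⟦(1 : ℤ)⟧} (H : Triangle.mk u v w ∈ distTriang D)
    {k : A ⟶ D'} {d : D' ⟶ X} (hA : Tri k d) {l : B ⟶ F} {q : F ⟶ Y} (hB : Tri l q)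
    {a : A ⟶ E₀} {b : E₀ ⟶ B} {c : B ⟶ A⟦(1 : ℤ)⟧} (H₀ : Triangle.mk a b c ∈ distTriang D)
    {j : E₀ ⟶ E} {p : E ⟶ Y'} (hj : Tri j p)
    (hc : l ≫ w = c ≫ k⟦(1 : ℤ)⟧') (haj : a ≫ j = k ≫ u) (hbj : b ≫ l = j ≫ v)
    (hX : ∀ f : Z ⟶ X, f = 0) (hY : ∀ f : Z ⟶ Y, f = 0) (h : Z ⟶ Y') : h = 0 := by
  have hT : Tri u v := ⟨w, H⟩
  have hT₀ : Tri a b := ⟨c, H₀⟩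
  obtain ⟨δ, Hj⟩ := id hj
  -- `k⟦1⟧` and `l⟦1⟧` are injective on morphisms from `Z`
  have injA : ∀ α : Z ⟶ A⟦(1 : ℤ)⟧, α ≫ k⟦(1 : ℤ)⟧' = 0 → α = 0 := by
    intro α hα
    obtain ⟨δ', HA⟩ := hA
    obtain ⟨γ, hγ⟩ := Triangle.coyoneda_exact₁ _ HA α hα
    rw [hγ, hX γ]
    exact zero_comp
  have injB : ∀ α : Z ⟶ B⟦(1 : ℤ)⟧, α ≫ l⟦(1 : ℤ)⟧' = 0 → α = 0 := by
    intro α hα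
    obtain ⟨δ', HB⟩ := hB
    obtain ⟨γ, hγ⟩ := Triangle.coyoneda_exact₁ _ HB α hα
    rw [hγ, hY γ]
    exact zero_comp
  have hca : c ≫ a⟦(1 : ℤ)⟧' = 0 := comp_distTriang_mor_zero₃₁ _ H₀
  have hδj : δ ≫ j⟦(1 : ℤ)⟧' = 0 := comp_distTriang_mor_zero₃₁ _ Hj
  have hvw : v ≫ w = 0 := comp_distTriang_mor_zero₂₃ _ H
  have he : h ≫ δ = 0 := by
    obtain ⟨α, hα⟩ := hT₀.lift_shift (h ≫ δ) (injB _ (by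
      rw [Category.assoc, ← Functor.map_comp, hbj, Functor.map_comp, Category.assoc,
        reassoc_of% hδj, zero_comp, comp_zero]))
    obtain ⟨ω, hω⟩ : ∃ ω : Z ⟶ F, α ≫ k⟦(1 : ℤ)⟧' = ω ≫ w :=
      Triangle.coyoneda_exact₁ _ H (α ≫ k⟦(1 : ℤ)⟧') (by
        change (α ≫ k⟦(1 : ℤ)⟧') ≫ u⟦(1 : ℤ)⟧' = 0
        rw [Category.assoc, ← Functor.map_comp, ← haj, Functor.map_comp, ← Category.assoc, ← hα,
          Category.assoc, hδj, comp_zero])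
    obtain ⟨β, hβ⟩ := hB.lift ω (hY _)
    have hαβ : α = β ≫ c := by
      rw [← sub_eq_zero]
      apply injA
      rw [Preadditive.sub_comp, hω, hβ, Category.assoc, Category.assoc, hc, sub_self]
    rw [hα, hαβ, Category.assoc, hca, comp_zero]
  obtain ⟨ε, hε⟩ : ∃ ε : Z ⟶ E, h = ε ≫ p := Triangle.coyoneda_exact₃ _ Hj h he
  obtain ⟨β, hβ⟩ := hB.lift (ε ≫ v) (hY _)
  have hβc : β ≫ c = 0 := injA _ (by
    rw [Category.assoc, ← hc, ← Category.assoc, ← hβ, Category.assoc, hvw, comp_zero])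
  obtain ⟨ε₀, hε₀⟩ : ∃ ε₀ : Z ⟶ E₀, β = ε₀ ≫ b := Triangle.coyoneda_exact₃ _ H₀ β hβc
  obtain ⟨α, hα⟩ := hT.lift (ε - ε₀ ≫ j) (by
    rw [Preadditive.sub_comp, hβ, hε₀, Category.assoc, Category.assoc, hbj, sub_self])
  obtain ⟨α', hα'⟩ := hA.lift α (hX _)
  have : ε = (ε₀ + α' ≫ a) ≫ j := by
    rw [Preadditive.add_comp, Category.assoc, haj, ← Category.assoc, ← hα', ← hα]
    abel
  rw [hε, this, Category.assoc, hj.zero, comp_zero]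

/-- Subadditivity of the weight of filtrations on distinguished triangles. -/
lemma Filt.subadd (hco : IsCoTStructureIn D Set.univ ge le)
    (hfin : FiniteCoheart D (coheart D ge le)) {a : ℤ} {t : ℝ} (n : ℕ) {D' E F : D} {x y : ℝ}
    {u : D' ⟶ E} {v : E ⟶ F} {w : F ⟶ D'⟦(1 : ℤ)⟧} (H : Triangle.mk u v w ∈ distTriang D)
    (hD' : Filt (coheart D ge le) a t n D' x) (hF : Filt (coheart D ge le) a t n F y) :
    ∃ z ≤ x + y, Filt (coheart D ge le) a t n E z := by
  induction n generalizing D' E F x y with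
  | zero =>
    exact ⟨0, by rw [hD'.2, hF.2, add_zero], Tri.isZero_mid ⟨w, H⟩ hD'.1 hF.1, rfl⟩
  | succ n ih =>
    have hT : Tri u v := ⟨w, H⟩
    -- morphisms from `D'`, `F` and hence `E` to objects of weight above `N = a + n` vanish
    have wD' : ∀ T ∈ le, ∀ f : D' ⟶ T⟦a + n + 1⟧, f = 0 := fun T hT f =>
      hD'.hom_zero hco hT (by push_cast; lia) f
    have wF : ∀ T ∈ le, ∀ f : F ⟶ T⟦a + n + 1⟧, f = 0 := fun T hT f =>
      hF.hom_zero hco hT (by push_cast; lia) f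
    have wE : ∀ T ∈ le, ∀ f : E ⟶ T⟦a + n + 1⟧, f = 0 := fun T hT' f => by
      obtain ⟨l, rfl⟩ := hT.desc f (wD' T hT' _)
      rw [wF T hT' l, comp_zero]
    obtain ⟨A, X, x', s, k, d, hX, hs, hA, hkd, hx⟩ := hD'
    obtain ⟨B, Y, y', r, l, q, hY, hr, hB, hlq, hy⟩ := hF
    have sh : ∀ (R T : D) (_ : ∀ f : R ⟶ T⟦a + n⟧, f = 0) (f : R⟦(1 : ℤ)⟧ ⟶ T⟦a + n + 1⟧),
        f = 0 := by
      intro R T h f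
      rw [← cancel_mono (shiftIso T (a + n) 1 _ rfl).inv, zero_comp]
      obtain ⟨g, hg⟩ := (shiftFunctor D (1 : ℤ)).map_surjective
        (f ≫ (shiftIso T (a + n) 1 _ rfl).inv)
      rw [← hg, h g, Functor.map_zero]
    obtain ⟨c, hc⟩ := hkd.lift_shift (l ≫ w) (by
      rw [← cancel_mono (shiftIso X (a + n) 1 _ rfl).hom, zero_comp]
      exact hB.hom_zero hco hX.2 (by lia) _)
    obtain ⟨E₀, i, b, H₀⟩ := distinguished_cocone_triangle₂ c
    obtain ⟨j, hij, hbj⟩ : ∃ j : E₀ ⟶ E, i ≫ j = k ≫ u ∧ b ≫ l = j ≫ v :=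
      complete_distinguished_triangle_morphism₂ _ _ H₀ H k l hc.symm
    obtain ⟨z, hz, hE₀⟩ := ih H₀ hA hB
    obtain ⟨Y', p, δ, Hj⟩ := distinguished_cocone_triangle j
    have hj : Tri j p := ⟨δ, Hj⟩
    let e : Y'⟦-(a + n : ℤ)⟧⟦a + n⟧ ≅ Y' := shiftIso Y' (-(a + n)) (a + n) 0 (by ring) ≪≫ shift0 Y'
    have hY' : Y'⟦-(a + n : ℤ)⟧ ∈ coheart D ge le := by
      constructor
      · refine mem_ge_shift hco _ fun T hT f => ?_
        obtain ⟨g, rfl⟩ := Triangle.yoneda_exact₃ _ Hj f (wE T hT _)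
        rw [sh E₀ T (fun f => hE₀.hom_zero hco hT le_rfl f) g]
        exact comp_zero
      · refine mem_le_shift hco _ fun Z hZ f => ?_
        exact cone_orthogonal H hkd hlq H₀ hj hc hij hbj
          (hom_shift_zero hco hZ hX.2 (by lia)) (hom_shift_zero hco hZ hY.2 (by lia)) f
    obtain ⟨s₁, hs₁⟩ := hfin.1 (Y'⟦-(a + n : ℤ)⟧) (by exact hY')
    -- the approximation `E ⟶ X⟦N⟧ ⊞ Y⟦N⟧` extending `d`, through which `p` factors
    have vF : ∀ f : F⟦(-1 : ℤ)⟧ ⟶ X⟦a + n⟧, f = 0 := fun f => by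
      apply zero_of_shift_zero 1
      rw [← cancel_mono (shiftIso X (a + n) 1 _ rfl).hom, zero_comp,
        ← cancel_epi (shiftIso F (-1) 1 0 (by ring) ≪≫ shift0 F).inv, comp_zero]
      exact wF X hX.2 _
    obtain ⟨x₁, hx₁⟩ : ∃ x₁ : E ⟶ X⟦a + n⟧, d = u ≫ x₁ :=
      Triangle.yoneda_exact₂ _ (inv_rot_of_distTriang _ H) d (vF _)
    have fac : ∀ f : E ⟶ Y', ∃ g, f = biprod.lift x₁ (v ≫ q) ≫ g := by
      intro f
      have van : ∀ {R : D} {x : ℝ} (_ : Filt (coheart D ge le) a t n R x) (g : R ⟶ Y'),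
          g = 0 := fun hR g => by
        rw [← cancel_mono e.inv, zero_comp]
        exact hR.hom_zero hco hY'.2 le_rfl _
      obtain ⟨m, hm⟩ := hkd.desc (u ≫ f) (van hA _)
      obtain ⟨g, hg⟩ := hT.desc (f - x₁ ≫ m) (by
        rw [Preadditive.comp_sub, hm, hx₁, Category.assoc, sub_self])
      obtain ⟨m', hm'⟩ := hlq.desc g (van hB _)
      refine ⟨biprod.desc m m', ?_⟩
      rw [biprod.lift_desc, Category.assoc, ← hm', ← hg]
      abel
    obtain ⟨h', hp⟩ := fac p
    obtain ⟨h, hh⟩ := hj.desc (biprod.lift x₁ (v ≫ q)) (by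
      ext
      · rw [hE₀.hom_zero hco hX.2 le_rfl ((j ≫ biprod.lift x₁ (v ≫ q)) ≫ biprod.fst), zero_comp]
      · rw [hE₀.hom_zero hco hY.2 le_rfl ((j ≫ biprod.lift x₁ (v ≫ q)) ≫ biprod.snd), zero_comp])
    let σ := shiftBiprod X Y (a + n)
    obtain ⟨z', hz', hE⟩ := hE₀.min hco hfin (hj.iso₃ e.symm) hY' hs₁ (coheart_biprod hco hX hY)
      (count_biprod hs hr) (biprod.lift x₁ (v ≫ q) ≫ σ.inv) (e.hom ≫ h ≫ σ.inv)
      (σ.hom ≫ h' ≫ e.inv) (by simp [hh]) (by simp [reassoc_of% hp.symm])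
    refine ⟨z', hz'.trans ?_, hE⟩
    rw [hx, hy]
    push_cast
    linarith

end Main

/-! ### Comparison of the two notions of filtration -/

section Conversion

variable {D : Type u} [Category.{v} D] [Preadditive D] [HasZeroObject D] [HasShift D ℤ]
  [∀ n : ℤ, (shiftFunctor D n).Additive] [Pretriangulated D] [HasFiniteBiproducts D]
  {ge le : Set D}

/-- The three objects are the vertices of a distinguished triangle. -/
def IsTri (X Y Z : D) : Prop :=
  ∃ (f : X ⟶ Y) (g : Y ⟶ Z) (h : Z ⟶ X⟦(1 : ℤ)⟧), Triangle.mk f g h ∈ distTriang D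

/-- A co-t-filtration with all degrees in `a, …, a + n - 1` becomes a filtration indexed by that
window, by inserting zero factors in the missing degrees. -/
lemma Filt.of_filtration (hco : IsCoTStructureIn D Set.univ ge le) {a : ℤ} {t : ℝ} (n : ℕ) {m : ℕ}
    (k : Fin m → ℤ) (X : Fin m → D) (s : Fin m → ℕ) {E : D} (hk : StrictMono k)
    (ha : ∀ i, a ≤ k i) (hn : ∀ i, k i < a + n) (hX : ∀ i, X i ∈ coheart D ge le)
    (hs : ∀ i, HasSummandCountIn D (coheart D ge le) (X i) (s i))
    (hE : HasFiltrationIn D Set.univ E fun i => (X i)⟦k i⟧) :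
    Filt (coheart D ge le) a t n E (∑ i, (s i : ℝ) * Real.exp ((k i : ℝ) * t)) := by
  induction n generalizing m E with
  | zero =>
    cases m with
    | zero =>
      obtain ⟨A, hA, ⟨e⟩, _⟩ := hE
      simpa using Filt.zero hco 0 (hA.of_iso e.symm)
    | succ m =>
      have h1 := ha 0
      have h2 := hn 0
      push_cast at h2
      lia
  | succ n ih =>
    cases m with
    | zero =>
      obtain ⟨A, hA, ⟨e⟩, _⟩ := hE
      simpa using Filt.zero hco (n + 1) (hA.of_iso e.symm)
    | succ m =>
      by_cases htop : k (Fin.last m) = a + n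
      · obtain ⟨A, hA, ⟨e⟩, _, hT⟩ := hE
        obtain ⟨f, g, h, H⟩ := hT (Fin.last m)
        have hR : Filt (coheart D ge le) a t n (A (Fin.last m).castSucc)
            (∑ i : Fin m, (s i.castSucc : ℝ) * Real.exp ((k i.castSucc : ℝ) * t)) := by
          refine ih (fun i => k i.castSucc) (fun i => X i.castSucc) (fun i => s i.castSucc)
            (hk.comp Fin.strictMono_castSucc) (fun i => ha _)
            (fun i => htop ▸ hk (Fin.castSucc_lt_last i)) (fun i => hX _) (fun i => hs _)
            ⟨fun i => A i.castSucc, hA, ⟨Iso.refl _⟩, fun _ => Set.mem_univ _,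
              fun i => hT i.castSucc⟩
        have T : Tri f g := ⟨h, H⟩
        rw [Fin.sum_univ_castSucc]
        refine Filt.iso ?_ e
        refine ⟨_, X (Fin.last m), _, s (Fin.last m), f, _, hX _, hs _, hR,
          T.iso₃ (eqToIso (congrArg (fun j : ℤ => (X (Fin.last m))⟦j⟧) htop)), ?_⟩
        rw [htop, wt]
      · refine (ih k X s hk ha (fun i => ?_) hX hs hE).pad hco
        have h1 := hn (Fin.last m)
        have h2 := hk.monotone (Fin.le_last i)
        push_cast at h1
        lia

lemma Filt.exists_filtration {H : Set D} {a : ℤ} {t : ℝ} {n : ℕ} {E : D} {x : ℝ}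
    (hE : Filt H a t n E x) :
    ∃ (X : Fin n → D) (s : Fin n → ℕ), (∀ i, X i ∈ H) ∧ (∀ i, HasSummandCountIn D H (X i) (s i)) ∧
      HasFiltrationIn D Set.univ E (fun i => (X i)⟦a + (i : ℕ)⟧) ∧
      x = ∑ i, (s i : ℝ) * Real.exp (((a + (i : ℕ) : ℤ) : ℝ) * t) := by
  induction n generalizing E x with
  | zero =>
    exact ⟨fun i => i.elim0, fun i => i.elim0, fun i => i.elim0, fun i => i.elim0,
      ⟨fun _ => E, hE.1, ⟨Iso.refl _⟩, fun _ => Set.mem_univ _, fun i => i.elim0⟩, by simp [hE.2]⟩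
  | succ n ih =>
    obtain ⟨R, Y, y, r, f, g, hY, hr, hR, ⟨h, hT⟩, rfl⟩ := hE
    obtain ⟨X, s, hX, hs, ⟨A, hA, ⟨e⟩, _, hF⟩, rfl⟩ := ih hR
    refine ⟨Fin.snoc (α := fun _ => D) X Y, Fin.snoc (α := fun _ => ℕ) s r, ?_, ?_,
      ⟨Fin.snoc (α := fun _ => D) A E, ?_, ?_, fun _ => Set.mem_univ _, ?_⟩, ?_⟩
    · intro i
      refine Fin.lastCases ?_ (fun j => ?_) i
      · rwa [Fin.snoc_last]
      · rw [Fin.snoc_castSucc]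
        exact hX j
    · intro i
      refine Fin.lastCases ?_ (fun j => ?_) i
      · rwa [Fin.snoc_last, Fin.snoc_last]
      · rw [Fin.snoc_castSucc, Fin.snoc_castSucc]
        exact hs j
    · rw [← Fin.castSucc_zero, Fin.snoc_castSucc]
      exact hA
    · rw [Fin.snoc_last]
      exact ⟨Iso.refl _⟩
    · intro i
      change IsTri (Fin.snoc (α := fun _ => D) A E i.castSucc)
        (Fin.snoc (α := fun _ => D) A E i.succ)
        ((Fin.snoc (α := fun _ => D) X Y i : D)⟦a + (i : ℕ)⟧)
      refine Fin.lastCases ?_ (fun j => ?_) i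
      · rw [Fin.snoc_castSucc, Fin.succ_last, Fin.snoc_last, Fin.snoc_last]
        obtain ⟨h', T⟩ := Tri.iso₁ ⟨h, hT⟩ e.symm
        exact ⟨_, _, h', T⟩
      · rw [Fin.snoc_castSucc, Fin.succ_castSucc, Fin.snoc_castSucc, Fin.snoc_castSucc]
        exact hF j
    · rw [Fin.sum_univ_castSucc]
      simp [wt]

lemma coComplexity_le {H : Set D} {a : ℤ} {t : ℝ} {n : ℕ} {E : D} {x : ℝ}
    (hE : Filt H a t n E x) : coComplexity D H t E ≤ ENNReal.ofReal x := by
  obtain ⟨X, s, hX, hs, hF, hx⟩ := hE.exists_filtration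
  refine sInf_le ⟨n, fun i => a + (i : ℕ), X, s, fun i j hij => ?_, hX, hs, hF, by rw [hx]⟩
  have : (i : ℕ) < j := hij
  change a + (i : ℕ) < a + (j : ℕ)
  lia

end Conversion

lemma exists_lower {m : ℕ} (k : Fin m → ℤ) : ∃ b : ℕ, ∀ i, -(b : ℤ) ≤ k i ∧ k i < b := by
  refine ⟨∑ i, (k i).natAbs + 1, fun i => ?_⟩
  have := Finset.single_le_sum (f := fun i => (k i).natAbs) (fun _ _ => Nat.zero_le _)
    (Finset.mem_univ i)
  lia

end CoSub

/-- for a bounded co-t-structure `𝔟 = (ge, le)` with finite co-heart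
on a `K`-linear idempotent complete triangulated category `D`, the invariant `δ̌_t^𝔟`
is subadditive on exact triangles: if `D' → E → F → ΣD'` is an exact triangle then
`δ̌_t^𝔟(E) ≤ δ̌_t^𝔟(D') + δ̌_t^𝔟(F)`. -/
theorem coComplexity_subadditive
    (K : Type w) [Field K]
    (D : Type u) [Category.{v} D] [Preadditive D] [CategoryTheory.Linear K D]
    [HasZeroObject D] [HasShift D ℤ] [∀ n : ℤ, (shiftFunctor D n).Additive]
    [Pretriangulated D] [HasFiniteBiproducts D] [IsIdempotentComplete D]
    (ge le : Set D)
    (hco : IsCoTStructureIn D Set.univ ge le)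
    (hbd : IsBoundedIn D Set.univ ge le)
    (hfin : FiniteCoheart D (coheart D ge le))
    (D' E F : D)
    (u : D' ⟶ E) (v : E ⟶ F) (w : F ⟶ D'⟦(1 : ℤ)⟧)
    (hT : Triangle.mk u v w ∈ distTriang D) (t : ℝ) :
    coComplexity D (coheart D ge le) t E ≤
      coComplexity D (coheart D ge le) t D' + coComplexity D (coheart D ge le) t F := by
  change _ ≤ sInf _ + sInf _
  rw [ENNReal.sInf_add]
  refine le_iInf₂ fun c₁ hc₁ => ?_
  rw [ENNReal.add_sInf]
  refine le_iInf₂ fun c₂ hc₂ => ?_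
  obtain ⟨m₁, k₁, X₁, s₁, hk₁, hX₁, hs₁, hF₁, rfl⟩ := hc₁
  obtain ⟨m₂, k₂, X₂, s₂, hk₂, hX₂, hs₂, hF₂, rfl⟩ := hc₂
  obtain ⟨b₁, hb₁⟩ := CoSub.exists_lower k₁
  obtain ⟨b₂, hb₂⟩ := CoSub.exists_lower k₂
  -- a common window of degrees for the two filtrations
  have F₁ := CoSub.Filt.of_filtration hco (a := -((b₁ + b₂ : ℕ) : ℤ)) (t := t)
    ((b₁ + b₂) + (b₁ + b₂)) k₁ X₁ s₁ hk₁ (fun i => by have := hb₁ i; lia)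
    (fun i => by have := hb₁ i; lia) hX₁ hs₁ hF₁
  have F₂ := CoSub.Filt.of_filtration hco (a := -((b₁ + b₂ : ℕ) : ℤ)) (t := t)
    ((b₁ + b₂) + (b₁ + b₂)) k₂ X₂ s₂ hk₂ (fun i => by have := hb₂ i; lia)
    (fun i => by have := hb₂ i; lia) hX₂ hs₂ hF₂
  obtain ⟨z, hz, hE⟩ := CoSub.Filt.subadd hco hfin _ hT F₁ F₂
  rw [← ENNReal.ofReal_add (by positivity) (by positivity)]
  exact (CoSub.coComplexity_le hE).trans (ENNReal.ofReal_le_ofReal hz)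
end

section
/- Let K be a field, D a K-linear idempotent complete triangulated category, and 𝔟 a bounded co-t-structure on D with finite co-heart C. Let M_1,…,M_n ∈ C be a complete set of pairwise non-isomorphic indecomposable objects and M := M_1 ⊕ ⋯ ⊕ M_n. Then for any E ∈ D and every t ∈ ℝ, δ̌_t^𝔟(E) ≥ δ_t(M, E). -/
/-!
A co-t-filtration of `E` has steps `G → H → X⟦k⟧` with `X` a sum of `s` indecomposables of the
co-heart. Each such step is to be replaced, up to adding a complement, by at most `s` steps with
factor `(⨁ M)⟦k⟧`; as every indecomposable is a summand of `⨁ M`, it is enough to find at most `s`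
steps whose factors are shifted indecomposables.

The octahedral axiom, which would refine `G → H → X⟦k⟧` at once, is not part of `Pretriangulated`.
The substitute is the following argument (`exists_peel`, `reach_extension`). Let `N` be an
indecomposable summand of `X` and let `C` be the fibre of `H → X⟦k⟧ → N⟦k⟧`. A fill-in
`G → C` between the two triangles with middle object `H` has a cone `W`, and a fill-in
`W → X⟦k⟧` is a monomorphism, hence split; so `W` is a shifted summand of `X`. It is a proper summand: otherwise
`C → H` would be an isomorphism and `N` would vanish. By uniqueness of decompositions, `W⟦-k⟧`
is a sum of fewer than `s` indecomposables of the co-heart, and induction applies to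
`G → C → W`. Nothing identifies `W` with the complement of `N⟦k⟧`, but only the count matters.
-/

/- Common definitions: filtrations, categorical complexity and entropy,
(co-)t-structures, hearts/co-hearts, and associated entropy-type invariants. -/

open CategoryTheory CategoryTheory.Limits CategoryTheory.Pretriangulated Filter
open scoped ENNReal

universe w v u

open CatEnt

namespace CatEnt

section Aux

set_option linter.unusedSectionVars false

variable {D : Type u} [Category.{v} D] [Preadditive D]
    [HasZeroObject D] [HasShift D ℤ] [∀ n : ℤ, (shiftFunctor D n).Additive]
    [Pretriangulated D] [HasFiniteBiproducts D]

/-- There is a distinguished triangle `A → B → C → A⟦1⟧`, for some choice of the maps. -/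
def Tri (A B C : D) : Prop :=
  ∃ (f : A ⟶ B) (g : B ⟶ C) (h : C ⟶ A⟦(1 : ℤ)⟧), Triangle.mk f g h ∈ distTriang D

lemma Tri.iso {A B C A' B' C' : D} (h : Tri A B C) (a : A ≅ A') (b : B ≅ B') (c : C ≅ C') :
    Tri A' B' C' := by
  obtain ⟨f, g, h, mem⟩ := h
  refine ⟨a.inv ≫ f ≫ b.hom, b.inv ≫ g ≫ c.hom, c.inv ≫ h ≫ a.hom⟦(1 : ℤ)⟧', ?_⟩
  refine isomorphic_distinguished _ mem _ (Iso.symm ?_)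
  exact Triangle.isoMk _ _ a b c
    (by change f ≫ b.hom = a.hom ≫ a.inv ≫ f ≫ b.hom; rw [Iso.hom_inv_id_assoc])
    (by change g ≫ c.hom = b.hom ≫ b.inv ≫ g ≫ c.hom; rw [Iso.hom_inv_id_assoc])
    (by
      change h ≫ a.hom⟦(1 : ℤ)⟧' = c.hom ≫ c.inv ≫ h ≫ a.hom⟦(1 : ℤ)⟧'
      rw [Iso.hom_inv_id_assoc])

lemma tri_biprod (A B : D) : Tri A (A ⊞ B) B :=
  ⟨_, _, _, binaryBiproductTriangle_distinguished A B⟩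

/-- A product over `WalkingPair` is a binary biproduct. -/
noncomputable def piPairIso (f : WalkingPair → D) :
    ∏ᶜ f ≅ f WalkingPair.left ⊞ f WalkingPair.right where
  hom := biprod.lift (Pi.π f _) (Pi.π f _)
  inv := Pi.lift (fun j => match j with
    | WalkingPair.left => biprod.fst
    | WalkingPair.right => biprod.snd)
  hom_inv_id := by
    apply Limits.Pi.hom_ext
    rintro (_ | _) <;> simp
  inv_hom_id := by
    apply biprod.hom_ext <;> simp

lemma Tri.biprod {A B C A' B' C' : D} (h : Tri A B C) (h' : Tri A' B' C') :
    Tri (A ⊞ A') (B ⊞ B') (C ⊞ C') := by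
  obtain ⟨f, g, h, mem⟩ := h
  obtain ⟨f', g', h', mem'⟩ := h'
  let T : WalkingPair → Triangle D := fun j => match j with
    | WalkingPair.left => Triangle.mk f g h
    | WalkingPair.right => Triangle.mk f' g' h'
  have hT := productTriangle_distinguished T (by rintro (_ | _) <;> assumption)
  have key : Tri (productTriangle T).obj₁ (productTriangle T).obj₂ (productTriangle T).obj₃ :=
    ⟨_, _, _, hT⟩
  exact key.iso (piPairIso _) (piPairIso _) (piPairIso _)

/-- A monomorphism of a pretriangulated category splits, with its cone as complement. -/
lemma exists_compl_of_mono {A B : D} (f : A ⟶ B) [Mono f] :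
    ∃ U : D, Nonempty (B ≅ A ⊞ U) ∧ (IsZero U → IsIso f) := by
  obtain ⟨U, g, h, mem⟩ := distinguished_cocone_triangle f
  obtain ⟨e, -⟩ := exists_iso_binaryBiproduct_of_distTriang _ mem
    (Triangle.mor₃_eq_zero_of_mono₁ _ mem (by assumption))
  exact ⟨U, ⟨e⟩, fun hU => (Triangle.isZero₃_iff_isIso₁ _ mem).1 hU⟩

/-- The substitute for the octahedral axiom. Given a triangle `G → H → Y → G⟦1⟧` and a nonzero
retract `N` of `Y`, let `C` be the fibre of `H → Y → N`; then there is a triangle `G → C → W`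
with a monomorphism `W → Y` that is not an isomorphism. -/
lemma exists_peel {G H Y N : D} (h : Tri G H Y) (pr : Y ⟶ N) (sec : N ⟶ Y)
    (hs : sec ≫ pr = 𝟙 N) (hN : ¬ IsZero N) :
    ∃ (C W : D) (p : W ⟶ Y), Tri C H N ∧ Tri G C W ∧ Mono p ∧ ¬ IsIso p := by
  obtain ⟨g, v, w, mem⟩ := h
  obtain ⟨C, j, d, memC⟩ := distinguished_cocone_triangle₁ (v ≫ pr)
  obtain ⟨i, hi₁, hi₂⟩ : ∃ i : G ⟶ C, g = i ≫ j ∧ w ≫ i⟦(1 : ℤ)⟧' = pr ≫ d := by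
    obtain ⟨i, h₁, h₂⟩ := complete_distinguished_triangle_morphism₁ _ _ mem memC (𝟙 H) pr
      (by change v ≫ pr = 𝟙 H ≫ v ≫ pr; rw [Category.id_comp])
    exact ⟨i, (Category.comp_id g).symm.trans h₁, h₂⟩
  obtain ⟨W, c, r, memW⟩ := distinguished_cocone_triangle i
  obtain ⟨p, hp₁, hp₂⟩ : ∃ p : W ⟶ Y, c ≫ p = j ≫ v ∧ r = p ≫ w := by
    obtain ⟨p, h₁, h₂⟩ := complete_distinguished_triangle_morphism _ _ memW mem (𝟙 G) j
      (by change i ≫ j = 𝟙 G ≫ g; rw [Category.id_comp, hi₁])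
    refine ⟨p, h₁, ?_⟩
    have h₃ : r ≫ (𝟙 G)⟦(1 : ℤ)⟧' = p ≫ w := h₂
    rwa [CategoryTheory.Functor.map_id, Category.comp_id] at h₃
  refine ⟨C, W, p, ⟨_, _, _, memC⟩, ⟨_, _, _, memW⟩, ?_, ?_⟩
  · refine Preadditive.mono_of_cancel_zero _ (fun {T} z hz => ?_)
    -- `z` maps to zero in `G⟦1⟧`, hence lifts to `x : T ⟶ C`
    have hzr : z ≫ r = 0 := by rw [hp₂, reassoc_of% hz, zero_comp]
    obtain ⟨x, hx⟩ : ∃ x : T ⟶ C, z = x ≫ c := Triangle.coyoneda_exact₃ _ memW z hzr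
    obtain ⟨γ, hγ⟩ : ∃ γ : T ⟶ G, x ≫ j = γ ≫ g :=
      Triangle.coyoneda_exact₂ _ mem (x ≫ j) (by
        change (x ≫ j) ≫ v = 0
        rw [Category.assoc, ← hp₁, ← Category.assoc, ← hx, hz])
    have h0 : (x - γ ≫ i) ≫ j = 0 := by
      rw [Preadditive.sub_comp, hγ, Category.assoc, ← hi₁, sub_self]
    obtain ⟨y, hy⟩ : ∃ y : T⟦(1 : ℤ)⟧ ⟶ N, (x - γ ≫ i)⟦(1 : ℤ)⟧' = y ≫ d :=
      Triangle.coyoneda_exact₁ _ memC ((x - γ ≫ i)⟦(1 : ℤ)⟧') (by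
        change (x - γ ≫ i)⟦(1 : ℤ)⟧' ≫ j⟦(1 : ℤ)⟧' = 0
        rw [← Functor.map_comp, h0, Functor.map_zero])
    -- the connecting map of `C → H → N` factors through `i`, since `N` is a retract of `Y`
    have hd : d = sec ≫ w ≫ i⟦(1 : ℤ)⟧' := by
      rw [hi₂, ← Category.assoc, hs, Category.id_comp]
    obtain ⟨δ, hδ⟩ := (shiftFunctor D (1 : ℤ)).map_surjective (y ≫ sec ≫ w)
    have hxi : x - γ ≫ i = δ ≫ i := by
      apply (shiftFunctor D (1 : ℤ)).map_injective
      rw [hy, hd, Functor.map_comp, hδ]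
      simp only [Category.assoc]
    have hic : i ≫ c = 0 := comp_distTriang_mor_zero₁₂ _ memW
    rw [hx, sub_eq_iff_eq_add.1 hxi, Preadditive.add_comp, Category.assoc, Category.assoc, hic,
      comp_zero, comp_zero, add_zero]
  · intro hp
    apply hN
    let φ : Triangle.mk i c r ⟶ Triangle.mk g v w :=
      { hom₁ := 𝟙 G, hom₂ := j, hom₃ := p
        comm₁ := by change i ≫ j = 𝟙 G ≫ g; rw [Category.id_comp, hi₁]
        comm₂ := hp₁
        comm₃ := by
          change r ≫ (𝟙 G)⟦(1 : ℤ)⟧' = p ≫ w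
          rw [CategoryTheory.Functor.map_id, Category.comp_id, hp₂] }
    have : IsIso φ.hom₁ := inferInstanceAs (IsIso (𝟙 G))
    have hj : IsIso j := isIso₂_of_isIso₁₃ φ memW mem this hp
    exact (Triangle.isZero₃_iff_isIso₁ _ memC).2 hj

/-- `Reach M t c F`: there is a filtration of `F` with factors `M⟦k⟧`, for varying `k`, of total
weight `∑ exp (k * t) = c`. The inductive form makes it easy to append a step; `HasFiltrationIn`
indexes all steps at once. -/
inductive Reach (M : D) (t : ℝ) : ℝ → D → Prop
  | zero {Z : D} (hZ : IsZero Z) : Reach M t 0 Z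
  | step {c : ℝ} {A B : D} (k : ℤ) (h : Reach M t c A) (hT : Tri A B (M⟦k⟧)) :
      Reach M t (c + Real.exp ((k : ℝ) * t)) B

lemma Reach.iso {M : D} {t c : ℝ} {F F' : D} (h : Reach M t c F) (e : F ≅ F') :
    Reach M t c F' := by
  cases h with
  | zero hZ => exact .zero (hZ.of_iso e.symm)
  | step k h hT => exact .step k h (hT.iso (Iso.refl _) e (Iso.refl _))

lemma Reach.hasFiltrationIn {M : D} {t c : ℝ} {F : D} (h : Reach M t c F) :
    ∃ (m : ℕ) (k : Fin m → ℤ), HasFiltrationIn D Set.univ F (fun i => M⟦k i⟧) ∧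
      c = ∑ i, Real.exp ((k i : ℝ) * t) := by
  induction h with
  | @zero Z hZ =>
    exact ⟨0, Fin.elim0, ⟨fun _ => Z, hZ, ⟨Iso.refl _⟩, fun _ => trivial, fun i => i.elim0⟩,
      by simp⟩
  | @step c A B k₀ h hT ih =>
    obtain ⟨m, k, ⟨S, h0, ⟨e⟩, -, hS⟩, rfl⟩ := ih
    refine ⟨m + 1, Fin.snoc k k₀, ⟨Fin.snoc S B, ?_, ?_, fun _ => trivial, ?_⟩, ?_⟩
    · have : (Fin.snoc S B : Fin (m + 2) → D) 0 = S 0 := Fin.snoc_castSucc (α := fun _ => D) B S 0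
      rwa [this]
    · rw [Fin.snoc_last]
      exact ⟨Iso.refl _⟩
    · intro i
      induction i using Fin.lastCases with
      | last =>
        change Tri (Fin.snoc (α := fun _ => D) S B (Fin.last m).castSucc)
          (Fin.snoc (α := fun _ => D) S B (Fin.last m).succ)
          (M⟦(Fin.snoc (α := fun _ => ℤ) k k₀ (Fin.last m) : ℤ)⟧)
        rw [Fin.succ_last, Fin.snoc_last, Fin.snoc_last, Fin.snoc_castSucc]
        exact hT.iso e.symm (Iso.refl _) (Iso.refl _)
      | cast i =>
        change Tri (Fin.snoc (α := fun _ => D) S B i.castSucc.castSucc)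
          (Fin.snoc (α := fun _ => D) S B i.castSucc.succ)
          (M⟦(Fin.snoc (α := fun _ => ℤ) k k₀ i.castSucc : ℤ)⟧)
        rw [Fin.succ_castSucc, Fin.snoc_castSucc, Fin.snoc_castSucc, Fin.snoc_castSucc]
        exact hS i
    · rw [Fin.sum_univ_castSucc]
      simp

/-- Some `F ⊞ F'` has a filtration with factors shifts of `M` of total weight at most `c`. -/
def ReachSummand (M : D) (t c : ℝ) (F : D) : Prop :=
  ∃ (F' : D) (c' : ℝ), c' ≤ c ∧ Reach M t c' (F ⊞ F')

lemma ReachSummand.mono {M : D} {t c c' : ℝ} {F : D} (h : ReachSummand M t c F) (hc : c ≤ c') :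
    ReachSummand M t c' F := by
  obtain ⟨F', c₀, h₀, h⟩ := h
  exact ⟨F', c₀, h₀.trans hc, h⟩

lemma ReachSummand.iso {M : D} {t c : ℝ} {F G : D} (h : ReachSummand M t c F) (e : F ≅ G) :
    ReachSummand M t c G := by
  obtain ⟨F', c₀, h₀, h⟩ := h
  exact ⟨F', c₀, h₀, h.iso (biprod.mapIso e (Iso.refl _))⟩

/-- An extension by a shifted summand `N⟦k⟧` of `M⟦k⟧` costs one step. -/
lemma ReachSummand.step {M N N' : D} {t c : ℝ} {A B : D} (h : ReachSummand M t c A) (k : ℤ)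
    (hT : Tri A B (N⟦k⟧)) (e : M ≅ N ⊞ N') :
    ReachSummand M t (c + Real.exp ((k : ℝ) * t)) B := by
  obtain ⟨A', c', hc, h⟩ := h
  refine ⟨A' ⊞ N'⟦k⟧, c' + Real.exp ((k : ℝ) * t), by linarith, .step k h ?_⟩
  have : PreservesBinaryBiproducts (shiftFunctor D k) :=
    preservesBinaryBiproducts_of_preservesBiproducts _
  exact (hT.biprod (tri_biprod A' (N'⟦k⟧))).iso (Iso.refl _) (Iso.refl _)
    (((shiftFunctor D k).mapBiprod N N').symm ≪≫ (shiftFunctor D k).mapIso e.symm)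

/-- A binary biproduct of biproducts is a biproduct over the sum of the index types. -/
noncomputable def biprodBiproductIso {a b : ℕ} (F : Fin a ⊕ Fin b → D) :
    (⨁ fun i => F (Sum.inl i)) ⊞ (⨁ fun i => F (Sum.inr i)) ≅ ⨁ F where
  hom := biproduct.lift (fun x => match x with
    | Sum.inl i => biprod.fst ≫ biproduct.π (fun i => F (Sum.inl i)) i
    | Sum.inr i => biprod.snd ≫ biproduct.π (fun i => F (Sum.inr i)) i)
  inv := biprod.lift (biproduct.lift fun i => biproduct.π F (Sum.inl i))
    (biproduct.lift fun i => biproduct.π F (Sum.inr i))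
  hom_inv_id := by
    apply biprod.hom_ext <;> apply biproduct.hom_ext <;> intro i <;> simp
  inv_hom_id := by
    apply biproduct.hom_ext
    rintro (i | i) <;> simp

/-- Additivity of the number of indecomposable summands. -/
lemma HasSummandCountIn.biprod {H : Set D} {X Y : D} {a b : ℕ} (hX : HasSummandCountIn D H X a)
    (hY : HasSummandCountIn D H Y b) : HasSummandCountIn D H (X ⊞ Y) (a + b) := by
  obtain ⟨A, hA, ⟨e⟩⟩ := hX
  obtain ⟨B, hB, ⟨e'⟩⟩ := hY
  refine ⟨fun i => Sum.elim A B (finSumFinEquiv.symm i), fun i => ?_,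
    ⟨biprod.mapIso e e' ≪≫ biprodBiproductIso (Sum.elim A B) ≪≫
      biproduct.whiskerEquiv finSumFinEquiv (fun j => eqToIso (by simp))⟩⟩
  dsimp only
  generalize finSumFinEquiv.symm i = x
  rcases x with i | i
  · exact hA i
  · exact hB i

lemma HasSummandCountIn.isZero {H : Set D} {X : D} (hX : HasSummandCountIn D H X 0) :
    IsZero X := by
  obtain ⟨A, -, ⟨e⟩⟩ := hX
  refine IsZero.of_iso ?_ e
  rw [IsZero.iff_id_eq_zero]
  apply biproduct.hom_ext
  exact fun i => i.elim0

lemma HasSummandCountIn.iso {H : Set D} {X Y : D} {a : ℕ} (hX : HasSummandCountIn D H X a)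
    (e : X ≅ Y) : HasSummandCountIn D H Y a := by
  obtain ⟨A, hA, ⟨e'⟩⟩ := hX
  exact ⟨A, hA, ⟨e.symm ≪≫ e'⟩⟩

/-- An extension by `X⟦k⟧`, with `X ∈ H` a sum of `s` indecomposables, costs at most
`s` steps with factor `M⟦k⟧`. Here `H` is any class with unique decompositions
that is closed under summands. -/
lemma reach_extension {H : Set D} (hfin : FiniteCoheart D H)
    (hsum : ∀ X A B : D, X ∈ H → (X ≅ A ⊞ B) → A ∈ H ∧ B ∈ H)
    {M : D} (hM : ∀ N, IndecIn D H N → ∃ N', Nonempty (M ≅ N ⊞ N')) (t : ℝ) (k : ℤ) (s : ℕ) :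
    ∀ (c : ℝ) (G F X : D), ReachSummand M t c G → X ∈ H → HasSummandCountIn D H X s →
      Tri G F (X⟦k⟧) → ReachSummand M t (c + s * Real.exp ((k : ℝ) * t)) F := by
  induction s using Nat.strong_induction_on with
  | _ s ih =>
  intro c G F X hG hX hcount hT
  rcases s with _ | s
  · obtain ⟨f, g, h, mem⟩ := hT
    have : IsIso f := (Triangle.isZero₃_iff_isIso₁ _ mem).1
      ((shiftFunctor D k).map_isZero hcount.isZero)
    simpa using hG.iso (asIso f)
  · obtain ⟨P, hP, ⟨e⟩⟩ := id hcount
    have hs : (biproduct.ι P 0 ≫ e.inv)⟦k⟧' ≫ (e.hom ≫ biproduct.π P 0)⟦k⟧' = 𝟙 _ := by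
      rw [← Functor.map_comp]
      simp
    have hN : ¬ IsZero ((P 0)⟦k⟧) := by
      intro h0
      apply (hP 0).2.1
      rw [IsZero.iff_id_eq_zero] at h0 ⊢
      apply (shiftFunctor D k).map_injective
      simpa using h0
    obtain ⟨C, W, p, hC, hW, hp, hpi⟩ := exists_peel hT _ _ hs hN
    -- unshift `W ⟶ X⟦k⟧` to a split monomorphism `q : W' ⟶ X`
    obtain ⟨W', ⟨w⟩⟩ : ∃ W' : D, Nonempty (W'⟦k⟧ ≅ W) :=
      ⟨_, ⟨(shiftFunctor D k).objObjPreimageIso W⟩⟩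
    obtain ⟨q, hq⟩ := (shiftFunctor D k).map_surjective (w.hom ≫ p)
    have hqm : Mono q := by
      apply (shiftFunctor D k).mono_of_mono_map
      rw [hq]
      infer_instance
    obtain ⟨U, ⟨d⟩, hU⟩ := exists_compl_of_mono q
    obtain ⟨hW', hU'⟩ := hsum _ _ _ hX d
    obtain ⟨a, ha⟩ := hfin.1 W' hW'
    obtain ⟨b, hb⟩ := hfin.1 U hU'
    have hb0 : b ≠ 0 := by
      rintro rfl
      have := hU hb.isZero
      apply hpi
      have h1 : p = w.inv ≫ (shiftFunctor D k).map q := by rw [hq]; simp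
      rw [h1]
      infer_instance
    obtain ⟨Q, hQ, hQX⟩ := (ha.biprod hb).iso d.symm
    obtain ⟨σ, -⟩ := hfin.2.1 X hX _ _ P Q hP hQ ⟨e⟩ hQX
    have hab : s + 1 = a + b := by simpa using Fintype.card_congr σ
    have hCr := ih a (by omega) c G C W' hG hW' ha (hW.iso (Iso.refl _) (Iso.refl _) w.symm)
    obtain ⟨N', ⟨n⟩⟩ := hM _ (hP 0)
    refine (hCr.step k hC n).mono ?_
    have has : (a : ℝ) ≤ s := by exact_mod_cast (by omega : a ≤ s)
    push_cast
    nlinarith [Real.exp_pos ((k : ℝ) * t)]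

/-- `reach_extension` along a filtration. The order of the shifts `k i` plays no role. -/
lemma reach_of_filtration {H : Set D} (hfin : FiniteCoheart D H)
    (hsum : ∀ X A B : D, X ∈ H → (X ≅ A ⊞ B) → A ∈ H ∧ B ∈ H)
    {M : D} (hM : ∀ N, IndecIn D H N → ∃ N', Nonempty (M ≅ N ⊞ N')) (t : ℝ) (m : ℕ) :
    ∀ (F : D) (k : Fin m → ℤ) (X : Fin m → D) (s : Fin m → ℕ), (∀ i, X i ∈ H) →
      (∀ i, HasSummandCountIn D H (X i) (s i)) →
      HasFiltrationIn D Set.univ F (fun i => (X i)⟦k i⟧) →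
      ReachSummand M t (∑ i, (s i : ℝ) * Real.exp ((k i : ℝ) * t)) F := by
  induction m with
  | zero =>
    rintro F k X s - - ⟨A, h0, ⟨e⟩, -, -⟩
    refine ⟨A 0, 0, by simp, .zero ?_⟩
    have hF : IsZero F := h0.of_iso e.symm
    rw [IsZero.iff_id_eq_zero]
    apply biprod.hom_ext
    · exact hF.eq_of_tgt _ _
    · exact h0.eq_of_tgt _ _
  | succ m ih =>
    rintro F k X s hX hs ⟨A, h0, ⟨e⟩, -, hA⟩
    have hG := ih (A (Fin.last m).castSucc) (fun i => k i.castSucc) (fun i => X i.castSucc)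
      (fun i => s i.castSucc) (fun i => hX _) (fun i => hs _)
      ⟨fun i => A i.castSucc, h0, ⟨Iso.refl _⟩, fun _ => trivial, fun i => hA i.castSucc⟩
    rw [Fin.sum_univ_castSucc]
    exact reach_extension hfin hsum hM t _ _ _ _ _ _ hG (hX _) (hs _)
      (Tri.iso (hA (Fin.last m)) (Iso.refl _) e (Iso.refl _))

end Aux

end CatEnt

/-- for a bounded co-t-structure `𝔟 = (ge, le)` with finite co-heart
`H` on a `K`-linear idempotent complete triangulated category `D`, if
`M 0, …, M (n-1)` is a complete set of pairwise non-isomorphic indecomposable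
objects of `H` and `M := M 0 ⊕ ⋯ ⊕ M (n-1)`, then `δ̌_t^𝔟(E) ≥ δ_t(M, E)`. -/
theorem coComplexity_ge_complexity_indecs
    (K : Type w) [Field K]
    (D : Type u) [Category.{v} D] [Preadditive D] [CategoryTheory.Linear K D]
    [HasZeroObject D] [HasShift D ℤ] [∀ n : ℤ, (shiftFunctor D n).Additive]
    [Pretriangulated D] [HasFiniteBiproducts D] [IsIdempotentComplete D]
    (ge le : Set D)
    (hco : IsCoTStructureIn D Set.univ ge le)
    (hbd : IsBoundedIn D Set.univ ge le)
    (hfin : FiniteCoheart D (coheart D ge le))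
    (n : ℕ) (M : Fin n → D)
    (hindec : ∀ i, IndecIn D (coheart D ge le) (M i))
    (hpair : ∀ i j, i ≠ j → IsEmpty (M i ≅ M j))
    (hcomplete : ∀ T, IndecIn D (coheart D ge le) T → ∃ i, Nonempty (T ≅ M i))
    (E : D) (t : ℝ) :
    complexity D t (⨁ M) E ≤ coComplexity D (coheart D ge le) t E := by
  -- the co-heart inherits closure under direct summands
  have hsum : ∀ X A B : D, X ∈ coheart D ge le → (X ≅ A ⊞ B) →
      A ∈ coheart D ge le ∧ B ∈ coheart D ge le := by
    intro X A B hX e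
    have e' : X ≅ B ⊞ A := e ≪≫ biprod.braiding A B
    exact ⟨⟨hco.ge_summand A B (hco.ge_iso e hX.1), hco.le_summand A B (hco.le_iso e hX.2)⟩,
      ⟨hco.ge_summand B A (hco.ge_iso e' hX.1), hco.le_summand B A (hco.le_iso e' hX.2)⟩⟩
  have hM : ∀ N, IndecIn D (coheart D ge le) N → ∃ N', Nonempty ((⨁ M) ≅ N ⊞ N') := by
    intro N hN
    obtain ⟨i, ⟨e⟩⟩ := hcomplete N hN
    obtain ⟨U, ⟨d⟩, -⟩ := exists_compl_of_mono (e.hom ≫ biproduct.ι M i)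
    exact ⟨U, ⟨d⟩⟩
  refine le_sInf ?_
  rintro _ ⟨m, k, X, s, -, hX, hs, hF, rfl⟩
  obtain ⟨E', c, hc, hR⟩ := reach_of_filtration hfin hsum hM t m E k X s hX hs hF
  obtain ⟨l, k', hF', rfl⟩ := hR.hasFiltrationIn
  have hle : complexity D t (⨁ M) E ≤ ENNReal.ofReal (∑ i, Real.exp ((k' i : ℝ) * t)) :=
    sInf_le ⟨l, k', E', trivial, hF', rfl⟩
  exact hle.trans (ENNReal.ofReal_le_ofReal hc)
end
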